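/- Let n ≥ 5. There is a constant C (depending only on n and η) such that for all x ∈ ℝ^{n-1}, t ∈ ℝ, and s ∈ (−1/10,1/10), the second derivative in s of the inverse Fourier transform of the truncated surface measure satisfies |∂_s² (σ_s^{(0)})^∨(x,t)| ≤ C(1+|t|)^{(2−n)/2 + 2}. -/

import Mathlib

open MeasureTheory Real FourierTransform Filter
open scoped ENNReal RealInnerProductSpace

noncomputable section

/-- `ℝⁿ = ℝ^{n-1} × ℝ`, realized as `EuclideanSpace ℝ (Fin (m+1))` with `m = n-1`
spatial coordinates and the last coordinate playing the role of time. -/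
abbrev Spacetime (m : ℕ) := EuclideanSpace ℝ (Fin (m + 1))

namespace Wave

variable {m : ℕ}

/-- The time coordinate `τ` of a point `z = (ξ, τ)`. -/
def timeCoord (z : Spacetime m) : ℝ := z (Fin.last m)

/-- `g(ξ,τ) = |ξ|² - τ²`, written using `|ξ|² = ‖z‖² - τ²`. -/
def waveSymbol (z : Spacetime m) : ℝ := ‖z‖ ^ 2 - 2 * timeCoord z ^ 2

/-- The canonical surface measure `σ_s` on the level set `g⁻¹(s)` of
`g(ξ,τ) = |ξ|² - τ²`: the `(n-1)`-dimensional Hausdorff measure restricted to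
`g⁻¹(s)` (with the origin deleted). -/
def levelMeasure (m : ℕ) (s : ℝ) : Measure (Spacetime m) :=
  (μH[(m : ℝ)]).restrict {z | waveSymbol z = s ∧ z ≠ 0}

/-- `(σ_s^{(0)})^∨(w)`: the inverse Fourier transform of the truncated surface measure
`σ_s^{(0)} = η σ_s`, evaluated at `w = (x,t)`. -/
def sigmaCheck (η : Spacetime m → ℝ) (s : ℝ) (w : Spacetime m) : ℂ :=
  ∫ z, (η z : ℂ) * Complex.exp (2 * (π : ℂ) * Complex.I * ((⟪z, w⟫ : ℝ) : ℂ))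
    ∂(levelMeasure m s)

end Wave

open Wave

namespace Wave

open scoped NNReal Topology

section AreaFormula

/-- Comparison of Hausdorff measures of two images of the same set. -/
theorem hausdorffMeasure_image_le_of_dist_le {X Y Z : Type*} [MetricSpace Y] [MetricSpace Z]
    [MeasurableSpace Y] [BorelSpace Y] [MeasurableSpace Z] [BorelSpace Z]
    (p : X → Y) (q : X → Z) (s : Set X) (K : ℝ≥0) {d : ℝ} (hd : 0 ≤ d)
    (h : ∀ a ∈ s, ∀ b ∈ s, dist (p a) (p b) ≤ K * dist (q a) (q b)) :
    μH[d] (p '' s) ≤ (K : ℝ≥0∞) ^ d * μH[d] (q '' s) := by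
  rcases s.eq_empty_or_nonempty with rfl | ⟨x₀, hx₀⟩
  · simp
  have : Nonempty X := ⟨x₀⟩
  set r : Z → X := Function.invFunOn q s
  have hr : ∀ z ∈ q '' s, r z ∈ s ∧ q (r z) = z := fun z hz =>
    ⟨Function.invFunOn_mem hz, Function.invFunOn_eq hz⟩
  have hL : LipschitzOnWith K (p ∘ r) (q '' s) := by
    refine LipschitzOnWith.of_dist_le_mul fun a ha b hb => ?_
    have := h _ (hr a ha).1 _ (hr b hb).1
    rwa [(hr a ha).2, (hr b hb).2] at this
  have himg : p '' s ⊆ (p ∘ r) '' (q '' s) := by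
    rintro _ ⟨x, hx, rfl⟩
    refine ⟨q x, ⟨x, hx, rfl⟩, ?_⟩
    have hm := hr (q x) ⟨x, hx, rfl⟩
    have := h _ hm.1 _ hx
    rw [hm.2, dist_self, mul_zero] at this
    exact dist_le_zero.1 this
  exact (measure_mono himg).trans (hL.hausdorffMeasure_image_le hd)

/-- A measure inequality that holds locally up to factors arbitrarily close to one holds. -/
theorem measure_le_of_locally_le {X : Type*} [TopologicalSpace X] [SecondCountableTopology X]
    [MeasurableSpace X] [OpensMeasurableSpace X] (μ κ : Measure X) (V : Set X)
    (h : ∀ ε : ℝ≥0, 0 < ε → ∀ x ∈ V, ∃ U ∈ 𝓝 x, ∀ s ⊆ U, MeasurableSet s →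
      κ s ≤ (1 + ε : ℝ≥0) * μ s)
    {s : Set X} (hs : MeasurableSet s) (hsV : s ⊆ V) : κ s ≤ μ s := by
  have key : ∀ ε : ℝ≥0, 0 < ε → κ s ≤ (1 + ε : ℝ≥0) * μ s := by
    intro ε hε
    rcases s.eq_empty_or_nonempty with rfl | hne
    · simp
    choose! U hU hle using h ε hε
    obtain ⟨t, htV, htc, hcov⟩ := TopologicalSpace.countable_cover_nhdsWithin
      (f := fun x => interior (U x)) (s := s)
      (fun x hx => mem_nhdsWithin_of_mem_nhds (interior_mem_nhds.2 (hU x (hsV hx))))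
    have htne : t.Nonempty := by
      rcases t.eq_empty_or_nonempty with rfl | h
      · obtain ⟨x, hx⟩ := hne
        simpa using hcov hx
      · exact h
    obtain ⟨f, hf⟩ := htc.exists_eq_range htne
    set W : ℕ → Set X := fun n => interior (U (f n))
    have hWm : ∀ n, MeasurableSet (disjointed W n) :=
      fun n => MeasurableSet.disjointed (fun n => isOpen_interior.measurableSet) n
    have hseq : s = ⋃ n, s ∩ disjointed W n := by
      rw [← Set.inter_iUnion, iUnion_disjointed, eq_comm, Set.inter_eq_left]
      intro x hx
      have := hcov hx
      rw [hf] at this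
      simpa [W] using this
    have hdis : Pairwise (Function.onFun Disjoint fun n => s ∩ disjointed W n) := by
      intro i j hij
      exact (disjoint_disjointed W hij).mono Set.inter_subset_right Set.inter_subset_right
    have hmeas : ∀ n, MeasurableSet (s ∩ disjointed W n) := fun n => hs.inter (hWm n)
    have e1 : κ s = ∑' n, κ (s ∩ disjointed W n) := by
      conv_lhs => rw [hseq]
      exact measure_iUnion hdis hmeas
    have e2 : μ s = ∑' n, μ (s ∩ disjointed W n) := by
      conv_lhs => rw [hseq]
      exact measure_iUnion hdis hmeas
    rw [e1, e2, ← ENNReal.tsum_mul_left]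
    refine ENNReal.tsum_le_tsum fun n => hle (f n) (hsV (htV ?_)) _ ?_ (hmeas n)
    · rw [hf]; exact ⟨n, rfl⟩
    · exact Set.inter_subset_right.trans ((disjointed_subset W n).trans interior_subset)
  have ht : Tendsto (fun ε : ℝ≥0 => ((1 + ε : ℝ≥0) : ℝ≥0∞) * μ s) (𝓝[>] 0) (𝓝 (1 * μ s)) := by
    refine ENNReal.Tendsto.mul_const ?_ (Or.inl one_ne_zero)
    have : Tendsto (fun ε : ℝ≥0 => ((1 + ε : ℝ≥0) : ℝ≥0∞)) (𝓝 0) (𝓝 ((1 + 0 : ℝ≥0) : ℝ≥0∞)) :=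
      ENNReal.tendsto_coe.2 (tendsto_const_nhds.add tendsto_id)
    simpa using this.mono_left nhdsWithin_le_nhds
  rw [one_mul] at ht
  exact ge_of_tendsto ht (eventually_nhdsWithin_of_forall fun ε hε => key ε hε)

/-- Area formula for injective continuous maps that are strictly differentiable on an open set,
the Jacobian being that of an endomorphism with the same metric distortion as the derivative. -/
theorem hausdorffMeasure_image_eq_lintegral {m : ℕ} {F : Type*} [NormedAddCommGroup F]
    [NormedSpace ℝ F] [MeasurableSpace F] [BorelSpace F]
    {G : EuclideanSpace ℝ (Fin m) → F} (hGc : Continuous G) (hGi : Function.Injective G)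
    {V : Set (EuclideanSpace ℝ (Fin m))} (hV : IsOpen V)
    (G' : EuclideanSpace ℝ (Fin m) → EuclideanSpace ℝ (Fin m) →L[ℝ] F)
    (B : EuclideanSpace ℝ (Fin m) → EuclideanSpace ℝ (Fin m) →L[ℝ] EuclideanSpace ℝ (Fin m))
    (hG' : ∀ y ∈ V, HasStrictFDerivAt G (G' y) y)
    (hB : ∀ y ∈ V, ∀ v, ‖G' y v‖ = ‖B y v‖) (hB0 : ∀ y ∈ V, (B y).det ≠ 0)
    (hBc : ContinuousOn (fun y => |(B y).det|) V)
    {s : Set (EuclideanSpace ℝ (Fin m))} (hs : MeasurableSet s) (hsV : s ⊆ V) :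
    μH[(m : ℝ)] (G '' s) = ∫⁻ y in s, ENNReal.ofReal |(B y).det| ∂μH[(m : ℝ)] := by
  have haar : (μH[(m : ℝ)] : Measure (EuclideanSpace ℝ (Fin m))).IsAddHaarMeasure := by
    simpa using isAddHaarMeasure_hausdorffMeasure (E := EuclideanSpace ℝ (Fin m))
  have hm0 : (0 : ℝ) ≤ m := Nat.cast_nonneg m
  set κ : Measure (EuclideanSpace ℝ (Fin m)) := (μH[(m : ℝ)] : Measure F).comap G with hκ
  have hemb : MeasurableEmbedding G := hGc.measurableEmbedding hGi
  have hκs : ∀ t, κ t = μH[(m : ℝ)] (G '' t) := fun t => hemb.comap_apply _ _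
  set μ : Measure (EuclideanSpace ℝ (Fin m)) :=
    (μH[(m : ℝ)]).withDensity fun y => ENNReal.ofReal |(B y).det| with hμ
  have hμs : ∀ t, MeasurableSet t → μ t = ∫⁻ y in t, ENNReal.ofReal |(B y).det| ∂μH[(m : ℝ)] :=
    fun t ht => withDensity_apply _ ht
  have loc : ∀ ε : ℝ≥0, 0 < ε → ∀ x ∈ V, ∃ U ∈ 𝓝 x, ∀ t ⊆ U, MeasurableSet t →
      κ t ≤ (1 + ε : ℝ≥0) * μ t ∧ μ t ≤ (1 + ε : ℝ≥0) * κ t := by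
    intro ε hε x hx
    obtain ⟨δ, hδ, hδε⟩ : ∃ δ : ℝ≥0, 0 < δ ∧ (1 + δ) ^ (m + 1) ≤ 1 + ε := by
      have hc : Tendsto (fun δ : ℝ≥0 => (1 + δ) ^ (m + 1)) (𝓝[>] 0) (𝓝 ((1 + 0) ^ (m + 1))) :=
        (Continuous.tendsto (by fun_prop) _).mono_left nhdsWithin_le_nhds
      have h1 : ∀ᶠ δ : ℝ≥0 in 𝓝[>] 0, (1 + δ) ^ (m + 1) < 1 + ε :=
        hc.eventually_lt_const (by simpa using hε)
      obtain ⟨δ, h1, h2⟩ := (h1.and self_mem_nhdsWithin).exists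
      exact ⟨δ, h2, h1.le⟩
    have hδ' : (0 : ℝ) < δ := hδ
    set D : ℝ := |(B x).det| with hD
    have hDpos : 0 < D := abs_pos.2 (hB0 x hx)
    obtain ⟨K, hK0, hK⟩ : ∃ K : ℝ, 0 < K ∧ ∀ v, ‖v‖ ≤ K * ‖B x v‖ := by
      set e := (B x).toContinuousLinearEquivOfDetNeZero (hB0 x hx)
      set T : EuclideanSpace ℝ (Fin m) →L[ℝ] EuclideanSpace ℝ (Fin m) :=
        e.symm.toContinuousLinearMap
      refine ⟨‖T‖ + 1, by positivity, fun v => ?_⟩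
      have h1 := T.le_opNorm (B x v)
      have h2 : T (B x v) = v := e.symm_apply_apply v
      rw [h2] at h1
      nlinarith [norm_nonneg (B x v)]
    set θ : ℝ := δ / (1 + δ) / K with hθ
    have hθ0 : 0 < θ := by positivity
    have hstr := (hG' x hx).isLittleO.def hθ0
    obtain ⟨U, hU, hUle⟩ : ∃ U ∈ 𝓝 x, ∀ a ∈ U, ∀ b ∈ U,
        ‖G a - G b - G' x (a - b)‖ ≤ θ * ‖a - b‖ := by
      rw [nhds_prod_eq] at hstr
      obtain ⟨U, hU, hU'⟩ := mem_prod_same_iff.1 hstr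
      exact ⟨U, hU, fun a ha b hb => hU' (Set.mk_mem_prod ha hb)⟩
    have hcx : ContinuousAt (fun y => |(B y).det|) x := hBc.continuousAt (hV.mem_nhds hx)
    have n1 : ∀ᶠ y in 𝓝 x, |(B y).det| < (1 + δ) * D :=
      hcx.eventually_lt_const (by change D < _; nlinarith)
    have n2 : ∀ᶠ y in 𝓝 x, D < (1 + δ) * |(B y).det| := by
      have : ContinuousAt (fun y => (1 + (δ : ℝ)) * |(B y).det|) x := continuousAt_const.mul hcx
      exact this.eventually_const_lt (by change D < (1 + δ) * D; nlinarith)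
    refine ⟨U ∩ {y | |(B y).det| < (1 + δ) * D ∧ D < (1 + δ) * |(B y).det|},
      inter_mem hU (n1.and n2), fun t ht htm => ?_⟩
    have hd : ∀ a ∈ t, ∀ b ∈ t, ‖G a - G b - G' x (a - b)‖ ≤ δ / (1 + δ) * ‖B x (a - b)‖ := by
      intro a ha b hb
      refine (hUle a (ht ha).1 b (ht hb).1).trans ?_
      calc θ * ‖a - b‖ ≤ θ * (K * ‖B x (a - b)‖) := by gcongr; exact hK _
        _ = _ := by rw [hθ]; field_simp
    have c1 : ∀ a ∈ t, ∀ b ∈ t, dist (G a) (G b) ≤ (1 + δ : ℝ≥0) * dist (B x a) (B x b) := by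
      intro a ha b hb
      rw [dist_eq_norm, dist_eq_norm, ← map_sub]
      have h1 := hd a ha b hb
      have h2 := norm_sub_norm_le (G a - G b) (G' x (a - b))
      rw [hB x hx] at h2
      have h3 : (δ : ℝ) / (1 + δ) ≤ δ := div_le_self hδ'.le (by linarith)
      push_cast
      nlinarith [norm_nonneg (B x (a - b))]
    have c2 : ∀ a ∈ t, ∀ b ∈ t, dist (B x a) (B x b) ≤ (1 + δ : ℝ≥0) * dist (G a) (G b) := by
      intro a ha b hb
      rw [dist_eq_norm, dist_eq_norm, ← map_sub]
      have h1 := hd a ha b hb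
      have h2 := norm_sub_norm_le (G' x (a - b)) (G a - G b)
      rw [hB x hx, norm_sub_rev (G' x (a - b))] at h2
      have h3 : ‖B x (a - b)‖ - δ / (1 + δ) * ‖B x (a - b)‖ = ‖B x (a - b)‖ / (1 + δ) := by
        field_simp; ring
      have h4 : ‖B x (a - b)‖ / (1 + δ) ≤ ‖G a - G b‖ := by linarith
      rw [div_le_iff₀ (by positivity)] at h4
      push_cast
      linarith
    have i1 := hausdorffMeasure_image_le_of_dist_le G (B x) t _ hm0 c1
    have i2 := hausdorffMeasure_image_le_of_dist_le (B x) G t _ hm0 c2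
    have hdet : μH[(m : ℝ)] (B x '' t) = ENNReal.ofReal D * μH[(m : ℝ)] t :=
      Measure.addHaar_image_continuousLinearMap μH[(m : ℝ)] (B x) t
    rw [hdet, ← hκs] at i1 i2
    rw [ENNReal.rpow_natCast] at i1 i2
    have j1 : ENNReal.ofReal D * μH[(m : ℝ)] t ≤ (1 + δ : ℝ≥0) * μ t := by
      rw [hμs t htm, ← setLIntegral_const, ← lintegral_const_mul' _ _ ENNReal.coe_ne_top]
      refine setLIntegral_mono' htm fun y hy => ?_
      rw [← ENNReal.ofReal_coe_nnreal, ← ENNReal.ofReal_mul (by positivity)]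
      refine ENNReal.ofReal_le_ofReal ?_
      push_cast
      exact (ht hy).2.2.le
    have j2 : μ t ≤ (1 + δ : ℝ≥0) * (ENNReal.ofReal D * μH[(m : ℝ)] t) := by
      rw [hμs t htm, ← mul_assoc, ← setLIntegral_const]
      refine setLIntegral_mono' htm fun y hy => ?_
      rw [← ENNReal.ofReal_coe_nnreal, ← ENNReal.ofReal_mul (by positivity)]
      refine ENNReal.ofReal_le_ofReal ?_
      push_cast
      exact (ht hy).2.1.le
    have hpow : ((1 + δ : ℝ≥0) : ℝ≥0∞) ^ (m + 1) ≤ (1 + ε : ℝ≥0) := by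
      rw [← ENNReal.coe_pow]
      exact ENNReal.coe_le_coe.2 hδε
    constructor
    · calc κ t ≤ ((1 + δ : ℝ≥0) : ℝ≥0∞) ^ m * (ENNReal.ofReal D * μH[(m : ℝ)] t) := i1
        _ ≤ ((1 + δ : ℝ≥0) : ℝ≥0∞) ^ m * ((1 + δ : ℝ≥0) * μ t) := by gcongr
        _ = ((1 + δ : ℝ≥0) : ℝ≥0∞) ^ (m + 1) * μ t := by rw [pow_succ, mul_assoc]
        _ ≤ _ := by gcongr
    · calc μ t ≤ (1 + δ : ℝ≥0) * (ENNReal.ofReal D * μH[(m : ℝ)] t) := j2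
        _ ≤ (1 + δ : ℝ≥0) * (((1 + δ : ℝ≥0) : ℝ≥0∞) ^ m * κ t) := by gcongr
        _ = ((1 + δ : ℝ≥0) : ℝ≥0∞) ^ (m + 1) * κ t := by rw [pow_succ']; ring
        _ ≤ _ := by gcongr
  rw [← hκs, ← hμs s hs]
  refine le_antisymm
    (measure_le_of_locally_le μ κ V (fun ε hε x hx => ?_) hs hsV)
    (measure_le_of_locally_le κ μ V (fun ε hε x hx => ?_) hs hsV)
  · obtain ⟨U, hU, h⟩ := loc ε hε x hx
    exact ⟨U, hU, fun t ht htm => (h t ht htm).1⟩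
  · obtain ⟨U, hU, h⟩ := loc ε hε x hx
    exact ⟨U, hU, fun t ht htm => (h t ht htm).2⟩

end AreaFormula

section Charts

variable {m : ℕ}

/-- The point of spacetime whose `i`-th coordinate is `r` and whose other coordinates are `y`. -/
def insertCoord (i : Fin (m + 1)) (r : ℝ) (y : EuclideanSpace ℝ (Fin m)) : Spacetime m :=
  WithLp.toLp 2 (i.insertNth r y.ofLp)

/-- The signature of the wave symbol. -/
def signature (m : ℕ) (i : Fin (m + 1)) : ℝ := if i = Fin.last m then -1 else 1

theorem signature_eq_or (i : Fin (m + 1)) : signature m i = 1 ∨ signature m i = -1 := by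
  unfold signature; split_ifs <;> simp

theorem signature_mul_self (i : Fin (m + 1)) : signature m i * signature m i = 1 := by
  rcases signature_eq_or i with h | h <;> simp [h]

theorem waveSymbol_eq_sum (z : Spacetime m) : waveSymbol z = ∑ i, signature m i * z i ^ 2 := by
  unfold waveSymbol timeCoord
  rw [EuclideanSpace.norm_sq_eq, Fin.sum_univ_castSucc, Fin.sum_univ_castSucc]
  have : ∀ i : Fin m, signature m i.castSucc = 1 := fun i => by
    simp [signature, (Fin.castSucc_lt_last i).ne]
  simp only [this, Real.norm_eq_abs, sq_abs, one_mul]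
  simp [signature]
  ring

/-- The part of the wave symbol that does not involve the `i`-th coordinate. -/
def restSymbol (i : Fin (m + 1)) (y : EuclideanSpace ℝ (Fin m)) : ℝ :=
  ∑ j, signature m (i.succAbove j) * y j ^ 2

@[simp] theorem insertCoord_apply_same (i : Fin (m + 1)) (r : ℝ) (y : EuclideanSpace ℝ (Fin m)) :
    insertCoord i r y i = r := by simp [insertCoord]

@[simp] theorem insertCoord_apply_succAbove (i : Fin (m + 1)) (r : ℝ)
    (y : EuclideanSpace ℝ (Fin m)) (j : Fin m) :
    insertCoord i r y (i.succAbove j) = y j := by simp [insertCoord]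

theorem waveSymbol_insertCoord (i : Fin (m + 1)) (r : ℝ) (y : EuclideanSpace ℝ (Fin m)) :
    waveSymbol (insertCoord i r y) = signature m i * r ^ 2 + restSymbol i y := by
  rw [waveSymbol_eq_sum, Fin.sum_univ_succAbove _ i]
  simp [restSymbol]

theorem norm_insertCoord_sq (i : Fin (m + 1)) (r : ℝ) (y : EuclideanSpace ℝ (Fin m)) :
    ‖insertCoord i r y‖ ^ 2 = r ^ 2 + ‖y‖ ^ 2 := by
  rw [EuclideanSpace.norm_sq_eq, EuclideanSpace.norm_sq_eq, Fin.sum_univ_succAbove _ i]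
  simp

theorem insertCoord_surj (i : Fin (m + 1)) (z : Spacetime m) :
    ∃ y : EuclideanSpace ℝ (Fin m), insertCoord i (z i) y = z := by
  refine ⟨WithLp.toLp 2 (i.removeNth z.ofLp), ?_⟩
  ext j
  simp [insertCoord]

/-- `insertCoord` as a continuous linear map. -/
def insertCoordL (i : Fin (m + 1)) : ℝ × EuclideanSpace ℝ (Fin m) →L[ℝ] Spacetime m :=
  LinearMap.toContinuousLinearMap
    { toFun := fun p => insertCoord i p.1 p.2
      map_add' := fun p q => by
        ext j
        refine Fin.succAboveCases i ?_ (fun k => ?_) j <;> simp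
      map_smul' := fun c p => by
        ext j
        refine Fin.succAboveCases i ?_ (fun k => ?_) j <;> simp }

@[simp] theorem insertCoordL_apply (i : Fin (m + 1)) (p : ℝ × EuclideanSpace ℝ (Fin m)) :
    insertCoordL i p = insertCoord i p.1 p.2 := rfl

/-- The linear map whose metric distortion is that of the graph map with slope `l`. -/
def graphDistortion (l : EuclideanSpace ℝ (Fin m)) :
    EuclideanSpace ℝ (Fin m) →L[ℝ] EuclideanSpace ℝ (Fin m) :=
  LinearMap.toContinuousLinearMap
    (LinearMap.transvection (innerₛₗ ℝ l) ((1 + √(1 + ‖l‖ ^ 2))⁻¹ • l))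

theorem det_graphDistortion (l : EuclideanSpace ℝ (Fin m)) :
    (graphDistortion l).det = √(1 + ‖l‖ ^ 2) := by
  unfold graphDistortion
  rw [LinearMap.det_toContinuousLinearMap, LinearMap.transvection.det]
  rw [innerₛₗ_apply_apply, inner_smul_right, real_inner_self_eq_norm_sq]
  have h := Real.sq_sqrt (show 0 ≤ 1 + ‖l‖ ^ 2 by positivity)
  have h0 := Real.sqrt_nonneg (1 + ‖l‖ ^ 2)
  field_simp
  nlinarith

theorem norm_graphDistortion_sq (l v : EuclideanSpace ℝ (Fin m)) :
    ‖graphDistortion l v‖ ^ 2 = ⟪l, v⟫ ^ 2 + ‖v‖ ^ 2 := by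
  have e : graphDistortion l v = v + (⟪l, v⟫ * (1 + √(1 + ‖l‖ ^ 2))⁻¹) • l := by
    simp [graphDistortion, LinearMap.transvection.apply, smul_smul]
  rw [e, norm_add_sq_real, inner_smul_right, norm_smul, real_inner_comm, mul_pow, norm_eq_abs,
    sq_abs]
  have h := Real.sq_sqrt (show 0 ≤ 1 + ‖l‖ ^ 2 by positivity)
  have h0 := Real.sqrt_nonneg (1 + ‖l‖ ^ 2)
  set k := √(1 + ‖l‖ ^ 2)
  have : ‖l‖ ^ 2 = k ^ 2 - 1 := by linarith
  rw [this]
  field_simp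
  ring

theorem continuous_insertCoord {X : Type*} [TopologicalSpace X] (i : Fin (m + 1)) {u : X → ℝ}
    {v : X → EuclideanSpace ℝ (Fin m)} (hu : Continuous u) (hv : Continuous v) :
    Continuous fun x => insertCoord i (u x) (v x) :=
  (insertCoordL i).continuous.comp (hu.prodMk hv)

/-- The Hausdorff measure on a graph is the weighted Lebesgue measure on the base. -/
theorem restrict_graph_eq_map (i : Fin (m + 1)) {u : EuclideanSpace ℝ (Fin m) → ℝ}
    (hu : Continuous u) {V : Set (EuclideanSpace ℝ (Fin m))} (hV : IsOpen V)
    {l : EuclideanSpace ℝ (Fin m) → EuclideanSpace ℝ (Fin m)} (hl : ContinuousOn l V)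
    (hd : ∀ y ∈ V, HasStrictFDerivAt u (innerSL ℝ (l y)) y) :
    (μH[(m : ℝ)] : Measure (Spacetime m)).restrict ((fun y => insertCoord i (u y) y) '' V) =
      Measure.map (fun y => insertCoord i (u y) y)
        ((μH[(m : ℝ)].restrict V).withDensity fun y => ENNReal.ofReal (√(1 + ‖l y‖ ^ 2))) := by
  set G : EuclideanSpace ℝ (Fin m) → Spacetime m := fun y => insertCoord i (u y) y with hG
  have hGc : Continuous G := continuous_insertCoord i hu continuous_id
  have hGi : Function.Injective G := by
    intro a b hab
    ext j
    have := congrArg (fun z : Spacetime m => z (i.succAbove j)) hab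
    simpa [hG] using this
  have hemb := hGc.measurableEmbedding hGi
  ext t ht
  rw [hemb.map_apply, withDensity_apply _ (hGc.measurable ht), Measure.restrict_apply ht,
    Measure.restrict_restrict (hGc.measurable ht), ← Set.image_preimage_inter,
    hausdorffMeasure_image_eq_lintegral hGc hGi hV
      (fun y => (insertCoordL i).comp ((innerSL ℝ (l y)).prod (ContinuousLinearMap.id ℝ _)))
      (fun y => graphDistortion (l y))]
  · refine lintegral_congr fun y => ?_
    rw [det_graphDistortion, abs_of_nonneg (Real.sqrt_nonneg _)]
  · intro y hy
    exact HasStrictFDerivAt.comp (f := fun y => (u y, y)) y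
      ((insertCoordL i).hasStrictFDerivAt) ((hd y hy).prodMk (hasStrictFDerivAt_id y))
  · intro y _ v
    refine (sq_eq_sq₀ (norm_nonneg _) (norm_nonneg _)).1 ?_
    rw [norm_graphDistortion_sq]
    simp [norm_insertCoord_sq]
  · intro y _
    rw [det_graphDistortion]
    positivity
  · simp_rw [det_graphDistortion]
    fun_prop
  · exact (hGc.measurable ht).inter hV.measurableSet
  · exact Set.inter_subset_right

end Charts

section LevelSets

variable {m : ℕ}

/-- The `i`-th coordinate, with sign `σ`, of the point of `{g = s}` lying over `y`. -/
def heightOver (i : Fin (m + 1)) (σ s : ℝ) (y : EuclideanSpace ℝ (Fin m)) : ℝ :=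
  σ * √(signature m i * (s - restSymbol i y))

/-- The integrand over the base of the part of a surface integral over `{g = s}` carried by the
chart given by the `i`-th coordinate with sign `σ`. -/
def chartIntegrand (h : Spacetime m → ℂ) (i : Fin (m + 1)) (σ s : ℝ)
    (y : EuclideanSpace ℝ (Fin m)) : ℂ :=
  ((|heightOver i σ s y| / ‖insertCoord i (heightOver i σ s y) y‖ : ℝ) : ℂ) *
    h (insertCoord i (heightOver i σ s y) y)

@[fun_prop]
theorem continuous_restSymbol (i : Fin (m + 1)) :
    Continuous (restSymbol i : EuclideanSpace ℝ (Fin m) → ℝ) := by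
  unfold restSymbol
  fun_prop

@[fun_prop]
theorem continuous_heightOver (i : Fin (m + 1)) (σ : ℝ) :
    Continuous fun p : ℝ × EuclideanSpace ℝ (Fin m) => heightOver i σ p.1 p.2 := by
  unfold heightOver
  fun_prop

theorem continuous_chartIntegrand {h : Spacetime m → ℂ} (hc : Continuous h)
    (h0 : ∀ z, h z ≠ 0 → 1 / 4 ≤ ‖z‖) (i : Fin (m + 1)) (σ : ℝ) :
    Continuous fun p : ℝ × EuclideanSpace ℝ (Fin m) => chartIntegrand h i σ p.1 p.2 := by
  have hG : Continuous fun p : ℝ × EuclideanSpace ℝ (Fin m) =>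
      insertCoord i (heightOver i σ p.1 p.2) p.2 :=
    continuous_insertCoord i (continuous_heightOver i σ) continuous_snd
  have e : (fun p : ℝ × EuclideanSpace ℝ (Fin m) => chartIntegrand h i σ p.1 p.2) = fun p =>
      ((|heightOver i σ p.1 p.2| / max (1 / 4) ‖insertCoord i (heightOver i σ p.1 p.2) p.2‖ : ℝ) : ℂ)
        * h (insertCoord i (heightOver i σ p.1 p.2) p.2) := by
    funext p
    unfold chartIntegrand
    by_cases hz : h (insertCoord i (heightOver i σ p.1 p.2) p.2) = 0
    · rw [hz, mul_zero, mul_zero]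
    · rw [max_eq_right (h0 _ hz)]
  rw [e]
  refine Continuous.mul (Complex.continuous_ofReal.comp (Continuous.div ?_ ?_ ?_)) (hc.comp hG)
  · exact (continuous_heightOver i σ).abs
  · exact continuous_const.max hG.norm
  · intro p
    exact (lt_of_lt_of_le (by norm_num) (le_max_left _ _)).ne'

theorem hasCompactSupport_chartIntegrand {h : Spacetime m → ℂ}
    (h1 : ∀ z, h z ≠ 0 → ‖z‖ ≤ 5 / 4) (i : Fin (m + 1)) {σ : ℝ} (hσ : σ * σ = 1) :
    HasCompactSupport fun p : ℝ × EuclideanSpace ℝ (Fin m) => chartIntegrand h i σ p.1 p.2 := by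
  set K : Set (ℝ × EuclideanSpace ℝ (Fin m)) :=
    (fun q : ℝ × EuclideanSpace ℝ (Fin m) => (signature m i * q.1 ^ 2 + restSymbol i q.2, q.2)) ''
      (Metric.closedBall 0 (5 / 4) ×ˢ Metric.closedBall 0 (5 / 4)) with hK
  have hKc : IsCompact K :=
    ((isCompact_closedBall _ _).prod (isCompact_closedBall _ _)).image (by fun_prop)
  refine HasCompactSupport.intro hKc fun p hp => ?_
  by_contra hne
  unfold chartIntegrand at hne
  have hu : heightOver i σ p.1 p.2 ≠ 0 := by
    rintro h; rw [h] at hne; simp at hne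
  have hh := h1 _ (right_ne_zero_of_mul hne)
  set u := heightOver i σ p.1 p.2 with hu_def
  have hsq : u ^ 2 + ‖p.2‖ ^ 2 ≤ (5 / 4) ^ 2 := by
    rw [← norm_insertCoord_sq i]
    gcongr
  have hpos : 0 ≤ signature m i * (p.1 - restSymbol i p.2) := by
    by_contra hneg
    apply hu
    rw [hu_def, heightOver, Real.sqrt_eq_zero_of_nonpos (not_le.1 hneg).le, mul_zero]
  have husq : u ^ 2 = signature m i * (p.1 - restSymbol i p.2) := by
    rw [hu_def, heightOver, mul_pow, Real.sq_sqrt hpos, pow_two, hσ, one_mul]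
  apply hp
  refine ⟨(u, p.2), ⟨?_, ?_⟩, ?_⟩
  · rw [mem_closedBall_zero_iff, Real.norm_eq_abs]
    exact abs_le_of_sq_le_sq (by nlinarith [sq_nonneg ‖p.2‖]) (by norm_num)
  · rw [mem_closedBall_zero_iff]
    exact le_of_sq_le_sq (by nlinarith [sq_nonneg u]) (by norm_num)
  · ext1
    · simp only [husq, ← mul_assoc, signature_mul_self]; ring
    · rfl

/-- The part of the level set `{g = s}` on which the `i`-th coordinate has sign `σ` is a graph. -/
theorem image_graph_eq (i : Fin (m + 1)) {σ : ℝ} (hσ : σ = 1 ∨ σ = -1) (s : ℝ) :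
    (fun y => insertCoord i (heightOver i σ s y) y) ''
        {y | 0 < signature m i * (s - restSymbol i y)} =
      {z : Spacetime m | waveSymbol z = s ∧ 0 < σ * z i} := by
  have hσ2 : σ * σ = 1 := by rcases hσ with rfl | rfl <;> norm_num
  ext z
  constructor
  · rintro ⟨y, hy, rfl⟩
    have hy' : 0 < signature m i * (s - restSymbol i y) := hy
    have hs := Real.sqrt_pos.2 hy'
    refine ⟨?_, ?_⟩
    · rw [waveSymbol_insertCoord, heightOver, mul_pow, Real.sq_sqrt hy'.le, pow_two, hσ2, one_mul,
        ← mul_assoc, signature_mul_self]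
      ring
    · simp only [insertCoord_apply_same, heightOver, ← mul_assoc, hσ2, one_mul]
      exact hs
  · rintro ⟨hz, hpos⟩
    obtain ⟨y, hy⟩ := insertCoord_surj i z
    rw [← hy, waveSymbol_insertCoord] at hz
    have hv : signature m i * (s - restSymbol i y) = (σ * z i) ^ 2 := by
      rw [← hz, add_sub_cancel_right, ← mul_assoc, signature_mul_self, mul_pow, pow_two σ, hσ2]
    refine ⟨y, ?_, ?_⟩
    · change 0 < signature m i * (s - restSymbol i y)
      rw [hv]; positivity
    · simp only [heightOver, hv]
      rw [Real.sqrt_sq hpos.le, ← mul_assoc, hσ2, one_mul, hy]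

/-- The slope of the graph `heightOver`. -/
def graphSlope (i : Fin (m + 1)) (σ s : ℝ) (y : EuclideanSpace ℝ (Fin m)) :
    EuclideanSpace ℝ (Fin m) :=
  WithLp.toLp 2 fun j =>
    -(signature m i * signature m (i.succAbove j) * y j / heightOver i σ s y)

theorem hasStrictFDerivAt_restSymbol (i : Fin (m + 1)) (y : EuclideanSpace ℝ (Fin m)) :
    HasStrictFDerivAt (restSymbol i) (∑ j, (signature m (i.succAbove j) * (2 * y j)) •
      (EuclideanSpace.proj j : EuclideanSpace ℝ (Fin m) →L[ℝ] ℝ)) y := by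
  unfold restSymbol
  refine HasStrictFDerivAt.fun_sum fun j _ => ?_
  have h := ((EuclideanSpace.proj j : EuclideanSpace ℝ (Fin m) →L[ℝ] ℝ).hasStrictFDerivAt
    (x := y)).pow 2
  refine (h.const_mul (signature m (i.succAbove j))).congr_fderiv ?_
  ext v
  simp
  ring

theorem hasStrictFDerivAt_heightOver (i : Fin (m + 1)) {σ : ℝ} (hσ : σ * σ = 1) {s : ℝ}
    {y : EuclideanSpace ℝ (Fin m)} (hy : 0 < signature m i * (s - restSymbol i y)) :
    HasStrictFDerivAt (heightOver i σ s) (innerSL ℝ (graphSlope i σ s y)) y := by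
  have h1 := ((hasStrictFDerivAt_restSymbol i y).const_sub s).const_mul (signature m i)
  have h2 := (Real.hasStrictDerivAt_sqrt hy.ne').comp_hasStrictFDerivAt y h1
  refine (h2.const_mul σ).congr_fderiv ?_
  ext v
  have hs := Real.sqrt_pos.2 hy
  have hσ0 : σ ≠ 0 := by rintro rfl; simp at hσ
  simp only [innerSL_apply_apply, PiLp.inner_apply, graphSlope, heightOver]
  simp
  rw [Finset.mul_sum, Finset.mul_sum, Finset.mul_sum]
  refine Finset.sum_congr rfl fun j _ => ?_
  field_simp
  rw [pow_two, hσ]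
  ring

theorem norm_graphSlope_sq (i : Fin (m + 1)) (σ s : ℝ) (y : EuclideanSpace ℝ (Fin m)) :
    ‖graphSlope i σ s y‖ ^ 2 = ‖y‖ ^ 2 / heightOver i σ s y ^ 2 := by
  rw [EuclideanSpace.norm_sq_eq, EuclideanSpace.norm_sq_eq, Finset.sum_div]
  refine Finset.sum_congr rfl fun j _ => ?_
  simp only [graphSlope, Real.norm_eq_abs, sq_abs, neg_sq, div_pow, mul_pow]
  rw [pow_two (signature m i), pow_two (signature m _), signature_mul_self, signature_mul_self]
  ring

theorem graph_density_eq (i : Fin (m + 1)) {σ s : ℝ} {y : EuclideanSpace ℝ (Fin m)}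
    (hu : heightOver i σ s y ≠ 0) :
    √(1 + ‖graphSlope i σ s y‖ ^ 2) =
      ‖insertCoord i (heightOver i σ s y) y‖ / |heightOver i σ s y| := by
  rw [Real.sqrt_eq_iff_mul_self_eq (by positivity) (by positivity), norm_graphSlope_sq,
    ← pow_two, div_pow, norm_insertCoord_sq, sq_abs]
  field_simp

theorem exists_hausdorffMeasure_eq_smul_volume (m : ℕ) : ∃ c : ℝ≥0,
    (μH[(m : ℝ)] : Measure (EuclideanSpace ℝ (Fin m))) = c • volume := by
  have haar : (μH[(m : ℝ)] : Measure (EuclideanSpace ℝ (Fin m))).IsAddHaarMeasure := by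
    simpa using isAddHaarMeasure_hausdorffMeasure (E := EuclideanSpace ℝ (Fin m))
  exact ⟨_, Measure.isAddLeftInvariant_eq_smul _ _⟩

theorem graph_integral_aux {h : Spacetime m → ℂ} (i : Fin (m + 1)) {σ : ℝ}
    {s : ℝ} {y : EuclideanSpace ℝ (Fin m)} (hu : heightOver i σ s y ≠ 0) :
    √(1 + ‖graphSlope i σ s y‖ ^ 2) •
      ((insertCoord i (heightOver i σ s y) y i ^ 2 /
        ‖insertCoord i (heightOver i σ s y) y‖ ^ 2 : ℝ) *
          h (insertCoord i (heightOver i σ s y) y)) = chartIntegrand h i σ s y := by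
  rw [graph_density_eq i hu, Complex.real_smul, ← mul_assoc, ← Complex.ofReal_mul, chartIntegrand]
  congr 2
  have h1 : 0 < ‖insertCoord i (heightOver i σ s y) y‖ := by
    refine norm_pos_iff.2 fun h0 => hu ?_
    have := congrArg (fun z : Spacetime m => z i) h0
    simpa using this
  have h2 : 0 < |heightOver i σ s y| := abs_pos.2 hu
  rw [insertCoord_apply_same, ← sq_abs]
  field_simp

/-- The surface integral over the part of `{g = s}` on which the `i`-th coordinate has sign `σ`. -/
theorem integral_graph_piece {h : Spacetime m → ℂ} (hc : Continuous h)
    (h0 : ∀ z, h z ≠ 0 → 1 / 4 ≤ ‖z‖ ∧ ‖z‖ ≤ 5 / 4) (i : Fin (m + 1)) {σ : ℝ}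
    (hσ : σ = 1 ∨ σ = -1) (s : ℝ) {c : ℝ≥0}
    (hcm : (μH[(m : ℝ)] : Measure (EuclideanSpace ℝ (Fin m))) = c • volume) :
    IntegrableOn (fun z : Spacetime m => ((z i ^ 2 / ‖z‖ ^ 2 : ℝ) : ℂ) * h z)
        {z | waveSymbol z = s ∧ 0 < σ * z i} μH[(m : ℝ)] ∧
      ∫ z in {z : Spacetime m | waveSymbol z = s ∧ 0 < σ * z i},
        ((z i ^ 2 / ‖z‖ ^ 2 : ℝ) : ℂ) * h z ∂μH[(m : ℝ)] =
      (c : ℝ) * ∫ y, chartIntegrand h i σ s y := by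
  have hσ2 : σ * σ = 1 := by rcases hσ with rfl | rfl <;> norm_num
  set V : Set (EuclideanSpace ℝ (Fin m)) := {y | 0 < signature m i * (s - restSymbol i y)}
  have hu : Continuous (heightOver i σ s : EuclideanSpace ℝ (Fin m) → ℝ) :=
    (continuous_heightOver i σ).comp (Continuous.prodMk_right s)
  have hV : IsOpen V := isOpen_lt continuous_const (by fun_prop)
  have hune : ∀ y ∈ V, heightOver i σ s y ≠ 0 := fun y hy =>
    mul_ne_zero (by rintro rfl; simp at hσ2) (Real.sqrt_pos.2 hy).ne'
  have hunV : ∀ y, y ∉ V → heightOver i σ s y = 0 := fun y hy => by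
    rw [heightOver, Real.sqrt_eq_zero_of_nonpos (not_lt.1 hy), mul_zero]
  have hl : ContinuousOn (graphSlope i σ s) V := by
    refine (PiLp.continuous_toLp 2 _).comp_continuousOn (continuousOn_pi.2 fun j => ?_)
    exact ((Continuous.continuousOn (by fun_prop)).div hu.continuousOn hune).neg
  have hG : Continuous fun y => insertCoord i (heightOver i σ s y) y :=
    continuous_insertCoord i hu continuous_id
  have hGi : Function.Injective fun y : EuclideanSpace ℝ (Fin m) =>
      insertCoord i (heightOver i σ s y) y := by
    intro a b hab
    ext j
    have := congrArg (fun z : Spacetime m => z (i.succAbove j)) hab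
    simpa using this
  have hemb := hG.measurableEmbedding hGi
  have hmeas := restrict_graph_eq_map i hu hV hl
    fun y hy => hasStrictFDerivAt_heightOver i hσ2 hy
  rw [image_graph_eq i hσ s] at hmeas
  have hdm : AEMeasurable (fun y => (√(1 + ‖graphSlope i σ s y‖ ^ 2)).toNNReal)
      (μH[(m : ℝ)].restrict V) := by
    have h1 : ContinuousOn (fun y => √(1 + ‖graphSlope i σ s y‖ ^ 2)) V := by fun_prop
    exact (h1.aemeasurable hV.measurableSet).real_toNNReal
  have hK : Continuous fun y => chartIntegrand h i σ s y :=
    (continuous_chartIntegrand hc (fun z hz => (h0 z hz).1) i σ).comp (Continuous.prodMk_right s)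
  have hKs : HasCompactSupport fun y => chartIntegrand h i σ s y := by
    have h2 := hasCompactSupport_chartIntegrand (fun z hz => (h0 z hz).2) i hσ2
    refine HasCompactSupport.intro (h2.isCompact.image continuous_snd) fun y hy => ?_
    by_contra hne
    exact hy ⟨(s, y), subset_tsupport _ hne, rfl⟩
  have hKi : Integrable (fun y => chartIntegrand h i σ s y) volume :=
    hK.integrable_of_hasCompactSupport hKs
  have hKiH : Integrable (fun y => chartIntegrand h i σ s y) μH[(m : ℝ)] := by
    rw [hcm]; exact hKi.smul_measure_nnreal
  rw [IntegrableOn, hmeas, hemb.integrable_map_iff, hemb.integral_map]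
  have hcongr : ∀ᵐ y ∂((μH[(m : ℝ)] : Measure (EuclideanSpace ℝ (Fin m))).restrict V),
      (√(1 + ‖graphSlope i σ s y‖ ^ 2)).toNNReal •
        (((insertCoord i (heightOver i σ s y) y i ^ 2 /
          ‖insertCoord i (heightOver i σ s y) y‖ ^ 2 : ℝ) : ℂ) *
          h (insertCoord i (heightOver i σ s y) y)) = chartIntegrand h i σ s y := by
    filter_upwards [ae_restrict_mem hV.measurableSet] with y hy
    rw [← graph_integral_aux i (hune y hy), NNReal.smul_def,
      Real.coe_toNNReal _ (Real.sqrt_nonneg _)]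
  constructor
  · refine (integrable_withDensity_iff_integrable_smul₀ hdm).2 ?_
    exact (integrable_congr hcongr).2 hKiH.restrict
  · refine (integral_withDensity_eq_integral_smul₀ hdm _).trans ?_
    rw [integral_congr_ae hcongr, setIntegral_eq_integral_of_forall_compl_eq_zero, hcm,
      integral_smul_nnreal_measure, NNReal.smul_def, Complex.real_smul]
    intro y hy
    simp [chartIntegrand, hunV y hy]

end LevelSets

section Coarea

variable {m : ℕ}

theorem measurableSet_piece (i : Fin (m + 1)) (σ : ℝ) :
    MeasurableSet {z : Spacetime m | 0 < σ * z i} :=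
  measurableSet_lt measurable_const (by fun_prop)

theorem measurable_waveSymbol : Measurable (waveSymbol : Spacetime m → ℝ) := by
  unfold waveSymbol timeCoord
  fun_prop

theorem inter_piece_eq (i : Fin (m + 1)) (σ s : ℝ) :
    {z : Spacetime m | 0 < σ * z i} ∩ {z | waveSymbol z = s ∧ z ≠ 0} =
      {z | waveSymbol z = s ∧ 0 < σ * z i} := by
  ext z
  simp only [Set.mem_inter_iff, Set.mem_ofPred_eq]
  constructor
  · rintro ⟨h1, h2, -⟩; exact ⟨h2, h1⟩
  · rintro ⟨h1, h2⟩
    refine ⟨h2, h1, ?_⟩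
    rintro rfl
    simp at h2

theorem sum_indicator_eq (h : Spacetime m → ℂ) {z : Spacetime m} (hz : z ≠ 0) :
    h z = ∑ i, ({z : Spacetime m | 0 < 1 * z i}.indicator
        (fun z => ((z i ^ 2 / ‖z‖ ^ 2 : ℝ) : ℂ) * h z) z +
      {z : Spacetime m | 0 < -1 * z i}.indicator
        (fun z => ((z i ^ 2 / ‖z‖ ^ 2 : ℝ) : ℂ) * h z) z) := by
  have key : ∀ i, ({z : Spacetime m | 0 < 1 * z i}.indicator
        (fun z => ((z i ^ 2 / ‖z‖ ^ 2 : ℝ) : ℂ) * h z) z +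
      {z : Spacetime m | 0 < -1 * z i}.indicator
        (fun z => ((z i ^ 2 / ‖z‖ ^ 2 : ℝ) : ℂ) * h z) z) =
      ((z i ^ 2 / ‖z‖ ^ 2 : ℝ) : ℂ) * h z := by
    intro i
    simp only [Set.indicator_apply, Set.mem_ofPred_eq, one_mul, neg_one_mul, Left.neg_pos_iff]
    rcases lt_trichotomy (z i) 0 with hi | hi | hi
    · simp [hi, hi.le]
    · simp [hi]
    · simp [hi, hi.le]
  simp_rw [key]
  rw [← Finset.sum_mul, ← Complex.ofReal_sum, ← Finset.sum_div]
  have : ∑ i, z i ^ 2 = ‖z‖ ^ 2 := by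
    rw [EuclideanSpace.norm_sq_eq]; simp
  rw [this, div_self (pow_ne_zero 2 (norm_ne_zero_iff.2 hz)), Complex.ofReal_one, one_mul]

/-- Surface integrals over the level sets of the wave symbol in terms of graph charts. -/
theorem integral_levelMeasure {h : Spacetime m → ℂ} (hc : Continuous h)
    (h0 : ∀ z, h z ≠ 0 → 1 / 4 ≤ ‖z‖ ∧ ‖z‖ ≤ 5 / 4) (s : ℝ) {c : ℝ≥0}
    (hcm : (μH[(m : ℝ)] : Measure (EuclideanSpace ℝ (Fin m))) = c • volume) :
    ∫ z, h z ∂(levelMeasure m s) = (c : ℝ) *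
      ∑ i, ((∫ y, chartIntegrand h i 1 s y) + ∫ y, chartIntegrand h i (-1) s y) := by
  have hS : MeasurableSet {z : Spacetime m | waveSymbol z = s ∧ z ≠ 0} :=
    (measurable_waveSymbol (measurableSet_singleton s)).inter (measurableSet_singleton 0).compl
  have e : ∫ z, h z ∂(levelMeasure m s) = ∫ z, ∑ i, ({z : Spacetime m | 0 < 1 * z i}.indicator
        (fun z => ((z i ^ 2 / ‖z‖ ^ 2 : ℝ) : ℂ) * h z) z +
      {z : Spacetime m | 0 < -1 * z i}.indicator
        (fun z => ((z i ^ 2 / ‖z‖ ^ 2 : ℝ) : ℂ) * h z) z) ∂(levelMeasure m s) := by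
    refine integral_congr_ae ?_
    filter_upwards [ae_restrict_mem hS] with z hz using sum_indicator_eq h hz.2
  have hpiece : ∀ i : Fin (m + 1), ∀ σ : ℝ, σ = 1 ∨ σ = -1 →
      Integrable ({z : Spacetime m | 0 < σ * z i}.indicator
        fun z => ((z i ^ 2 / ‖z‖ ^ 2 : ℝ) : ℂ) * h z) (levelMeasure m s) ∧
      ∫ z, {z : Spacetime m | 0 < σ * z i}.indicator
        (fun z => ((z i ^ 2 / ‖z‖ ^ 2 : ℝ) : ℂ) * h z) z ∂(levelMeasure m s) =
        (c : ℝ) * ∫ y, chartIntegrand h i σ s y := by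
    intro i σ hσ
    have h1 := integral_graph_piece hc h0 i hσ s hcm
    rw [integrable_indicator_iff (measurableSet_piece i σ),
      integral_indicator (measurableSet_piece i σ), levelMeasure, IntegrableOn,
      Measure.restrict_restrict (measurableSet_piece i σ), inter_piece_eq]
    exact h1
  rw [e, integral_finsetSum, Finset.mul_sum]
  swap
  · exact fun i _ => (hpiece i 1 (Or.inl rfl)).1.add (hpiece i (-1) (Or.inr rfl)).1
  refine Finset.sum_congr rfl fun i _ => ?_
  rw [integral_add (hpiece i 1 (Or.inl rfl)).1 (hpiece i (-1) (Or.inr rfl)).1,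
    (hpiece i 1 (Or.inl rfl)).2, (hpiece i (-1) (Or.inr rfl)).2, mul_add]

/-- The substitution `s = ε v + q`, `v = r²`, undone. -/
theorem integral_comp_sqrt_signed {ε q : ℝ} (hε : ε = 1 ∨ ε = -1) (Φ : ℝ → ℝ → ℂ)
    (h0 : ∀ s, Φ 0 s = 0) :
    ∫ s, Φ (√(ε * (s - q))) s = ∫ r in Set.Ioi (0 : ℝ), (2 * r : ℝ) * Φ r (ε * r ^ 2 + q) := by
  have h1 : ∫ s, Φ (√(ε * (s - q))) s = ∫ v, Φ (√v) (ε * v + q) := by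
    have := integral_sub_right_eq_self (μ := volume) (fun s => Φ (√(ε * s)) (s + q)) q
    simp only [sub_add_cancel] at this
    rw [this]
    rcases hε with rfl | rfl
    · simp
    · rw [← integral_neg_eq_self]; simp
  have h2 : ∫ v, Φ (√v) (ε * v + q) = ∫ v in Set.Ioi (0 : ℝ), Φ (√v) (ε * v + q) := by
    refine (setIntegral_eq_integral_of_forall_compl_eq_zero fun v hv => ?_).symm
    rw [Real.sqrt_eq_zero_of_nonpos (not_lt.1 hv), h0]
  rw [h1, h2, ← integral_comp_rpow_Ioi (fun v => Φ (√v) (ε * v + q)) two_ne_zero]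
  refine setIntegral_congr_fun measurableSet_Ioi fun r hr => ?_
  have hr' : 0 < r := hr
  simp only [Real.rpow_two, Real.sqrt_sq hr'.le]
  norm_num

theorem integral_eq_Ioi_add_Ioi_neg {f : ℝ → ℂ} (hf : Integrable f) :
    ∫ r, f r = (∫ r in Set.Ioi (0 : ℝ), f r) + ∫ r in Set.Ioi (0 : ℝ), f (-r) := by
  rw [← intervalIntegral.integral_Iic_add_Ioi (b := (0 : ℝ)) hf.integrableOn hf.integrableOn,
    add_comm, integral_comp_neg_Ioi, neg_zero]

/-- Fubini's theorem in the coordinates given by `insertCoord`. -/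
theorem integral_insertCoord (i : Fin (m + 1)) {f : Spacetime m → ℂ} (hf : Integrable f) :
    ∫ y, ∫ r, f (insertCoord i r y) = ∫ z, f z := by
  have mp : MeasurePreserving (fun p : ℝ × EuclideanSpace ℝ (Fin m) => insertCoord i p.1 p.2)
      (volume.prod volume) volume := by
    have m1 := (MeasurePreserving.id (volume : Measure ℝ)).prod
      (EuclideanSpace.volume_preserving_symm_measurableEquiv_toLp (Fin m))
    have m2 := (volume_preserving_piFinSuccAbove (fun _ : Fin (m + 1) => ℝ) i).symm
    have m3 := PiLp.volume_preserving_toLp (Fin (m + 1))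
    exact m3.comp (m2.comp m1)
  have hemb : MeasurableEmbedding
      (fun p : ℝ × EuclideanSpace ℝ (Fin m) => insertCoord i p.1 p.2) := by
    refine Continuous.measurableEmbedding
      (continuous_insertCoord i continuous_fst continuous_snd) fun p q hpq => ?_
    have h1 : ∀ j, insertCoord i p.1 p.2 j = insertCoord i q.1 q.2 j := fun j =>
      congrArg (fun z : Spacetime m => z j) hpq
    ext1
    · simpa using h1 i
    · ext j; simpa using h1 (i.succAbove j)
  rw [← mp.integral_comp hemb]
  exact (integral_prod_symm _ ((mp.integrable_comp_emb hemb).2 hf)).symm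

theorem continuous_div_norm_pow_mul {h : Spacetime m → ℂ} (hc : Continuous h)
    (h0 : ∀ z, h z ≠ 0 → 1 / 4 ≤ ‖z‖) {p : Spacetime m → ℝ} (hp : Continuous p) :
    Continuous fun z => ((p z / ‖z‖ : ℝ) : ℂ) * h z := by
  have e : (fun z => ((p z / ‖z‖ : ℝ) : ℂ) * h z) = fun z =>
      ((p z / max (1 / 4) ‖z‖ : ℝ) : ℂ) * h z := by
    funext z
    by_cases hz : h z = 0
    · rw [hz, mul_zero, mul_zero]
    · rw [max_eq_right (h0 _ hz)]
  rw [e]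
  refine Continuous.mul (Complex.continuous_ofReal.comp (hp.div ?_ ?_)) hc
  · exact continuous_const.max continuous_norm
  · intro z
    exact (lt_of_lt_of_le (by norm_num) (le_max_left _ _)).ne'

/-- The plane wave in the level parameter. -/
def levelPhase (l s : ℝ) : ℂ := Complex.exp ((2 * π * l * s : ℝ) * Complex.I)

@[fun_prop]
theorem continuous_levelPhase (l : ℝ) : Continuous (levelPhase l) := by
  unfold levelPhase
  fun_prop

theorem norm_levelPhase (l s : ℝ) : ‖levelPhase l s‖ = 1 := Complex.norm_exp_ofReal_mul_I _

theorem integrable_mul_levelPhase {X : Type*} [MeasurableSpace X] {μ : Measure X} {f : X → ℂ}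
    (hf : Integrable f μ) {g : X → ℝ} (hg : Measurable g) (l : ℝ) :
    Integrable (fun x => f x * levelPhase l (g x)) μ := by
  refine hf.mul_bdd (c := 1) ?_ ?_
  · exact ((continuous_levelPhase l).measurable.comp hg).aestronglyMeasurable
  · exact Eventually.of_forall fun x => (norm_levelPhase _ _).le

/-- Coarea formula for the wave symbol, tested against plane waves. -/
theorem integral_levelMeasure_mul_levelPhase {h : Spacetime m → ℂ} (hc : Continuous h)
    (h0 : ∀ z, h z ≠ 0 → 1 / 4 ≤ ‖z‖ ∧ ‖z‖ ≤ 5 / 4) {c : ℝ≥0}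
    (hcm : (μH[(m : ℝ)] : Measure (EuclideanSpace ℝ (Fin m))) = c • volume) :
    Integrable (fun s => ∫ z, h z ∂(levelMeasure m s)) ∧
    ∀ l : ℝ, ∫ s, (∫ z, h z ∂(levelMeasure m s)) * levelPhase l s =
      (c : ℝ) * ∫ z, ((2 * ‖z‖ : ℝ) : ℂ) * h z * levelPhase l (waveSymbol z) := by
  have hK : ∀ i : Fin (m + 1), ∀ σ : ℝ, σ * σ = 1 →
      Integrable (fun p : ℝ × EuclideanSpace ℝ (Fin m) => chartIntegrand h i σ p.1 p.2)
        (volume.prod volume) := fun i σ hσ =>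
    (continuous_chartIntegrand hc (fun z hz => (h0 z hz).1) i σ).integrable_of_hasCompactSupport
      (hasCompactSupport_chartIntegrand (fun z hz => (h0 z hz).2) i hσ)
  have hKs : ∀ i : Fin (m + 1), ∀ σ : ℝ, σ * σ = 1 →
      Integrable fun s => ∫ y, chartIntegrand h i σ s y := fun i σ hσ =>
    (hK i σ hσ).integral_prod_left
  have hform := fun s => integral_levelMeasure hc h0 s hcm
  refine ⟨?_, fun l => ?_⟩
  · simp_rw [hform]
    refine Integrable.const_mul (integrable_finsetSum _ fun i _ => ?_) _
    exact (hKs i 1 (by norm_num)).add (hKs i (-1) (by norm_num))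
  set F : Fin (m + 1) → Spacetime m → ℂ := fun i z =>
    ((2 * z i ^ 2 / ‖z‖ : ℝ) : ℂ) * h z * levelPhase l (waveSymbol z) with hF
  have hFc : ∀ i, Continuous (F i) := fun i => by
    refine Continuous.mul (continuous_div_norm_pow_mul hc (fun z hz => (h0 z hz).1) (by fun_prop)) ?_
    refine (continuous_levelPhase l).comp ?_
    unfold waveSymbol timeCoord
    fun_prop
  have hFs : ∀ i z, 5 / 4 < ‖z‖ → F i z = 0 := fun i z hz => by
    have : h z = 0 := by
      by_contra hne
      exact absurd (h0 z hne).2 (not_le.2 hz)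
    simp [hF, this]
  have hFi : ∀ i, Integrable (F i) := fun i => by
    refine (hFc i).integrable_of_hasCompactSupport
      (HasCompactSupport.intro (isCompact_closedBall 0 (5 / 4)) fun z hz => hFs i z ?_)
    simpa using hz
  have hline : ∀ i y, Integrable fun r => F i (insertCoord i r y) := fun i y => by
    refine Continuous.integrable_of_hasCompactSupport
      ((hFc i).comp (continuous_insertCoord i continuous_id continuous_const))
      (HasCompactSupport.intro (isCompact_closedBall 0 (5 / 4)) fun r hr => hFs i _ ?_)
    have hr' : 5 / 4 < |r| := by simpa using hr
    refine hr'.trans_le (abs_le_of_sq_le_sq ?_ (norm_nonneg _))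
    rw [norm_insertCoord_sq]
    nlinarith [sq_nonneg ‖y‖]
  have inner : ∀ i y, ∀ σ : ℝ, σ = 1 ∨ σ = -1 →
      ∫ s, chartIntegrand h i σ s y * levelPhase l s =
        ∫ r in Set.Ioi (0 : ℝ), F i (insertCoord i (σ * r) y) := by
    intro i y σ hσ
    have hσ2 : σ * σ = 1 := by rcases hσ with rfl | rfl <;> norm_num
    have := integral_comp_sqrt_signed (q := restSymbol i y) (signature_eq_or i)
      (fun r s => ((|σ * r| / ‖insertCoord i (σ * r) y‖ : ℝ) : ℂ) * h (insertCoord i (σ * r) y) *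
        levelPhase l s) (fun s => by simp)
    refine this.trans (setIntegral_congr_fun measurableSet_Ioi fun r hr => ?_)
    have hr' : 0 < r := hr
    simp only [hF]
    rw [waveSymbol_insertCoord, insertCoord_apply_same, ← mul_assoc, ← mul_assoc,
      ← Complex.ofReal_mul, mul_pow, pow_two σ, hσ2, one_mul]
    congr 3
    have : |σ * r| = r := by
      rcases hσ with rfl | rfl <;> simp [abs_of_pos hr']
    rw [this]; ring
  have hsum : ∀ i, (∫ s, (∫ y, chartIntegrand h i 1 s y) * levelPhase l s) +
      (∫ s, (∫ y, chartIntegrand h i (-1) s y) * levelPhase l s) = ∫ z, F i z := by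
    intro i
    have hKp : ∀ σ : ℝ, σ * σ = 1 →
        Integrable (fun p : ℝ × EuclideanSpace ℝ (Fin m) =>
          chartIntegrand h i σ p.1 p.2 * levelPhase l p.1) (volume.prod volume) := fun σ hσ =>
      integrable_mul_levelPhase (hK i σ hσ) measurable_fst l
    have swap : ∀ σ : ℝ, σ = 1 ∨ σ = -1 →
        ∫ s, (∫ y, chartIntegrand h i σ s y) * levelPhase l s =
          ∫ y, ∫ r in Set.Ioi (0 : ℝ), F i (insertCoord i (σ * r) y) ∧
        Integrable fun y => ∫ r in Set.Ioi (0 : ℝ), F i (insertCoord i (σ * r) y) := by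
      intro σ hσ
      have hσ2 : σ * σ = 1 := by rcases hσ with rfl | rfl <;> norm_num
      simp_rw [← integral_mul_const, ← inner i _ σ hσ]
      exact ⟨integral_integral_swap (hKp σ hσ2), (hKp σ hσ2).integral_prod_right⟩
    obtain ⟨e1, i1⟩ := swap 1 (Or.inl rfl)
    obtain ⟨e2, i2⟩ := swap (-1) (Or.inr rfl)
    rw [e1, e2, ← integral_add i1 i2, ← integral_insertCoord i (hFi i)]
    refine integral_congr_ae (Eventually.of_forall fun y => ?_)
    simp only [integral_eq_Ioi_add_Ioi_neg (hline i y), one_mul, neg_one_mul]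
  have hphase : ∀ i : Fin (m + 1), ∀ σ : ℝ, σ * σ = 1 →
      Integrable fun s => (∫ y, chartIntegrand h i σ s y) * levelPhase l s := fun i σ hσ =>
    integrable_mul_levelPhase (hKs i σ hσ) measurable_id l
  simp_rw [hform, mul_assoc, integral_const_mul, Finset.sum_mul, add_mul]
  rw [integral_finsetSum]
  swap
  · exact fun i _ => (hphase i 1 (by norm_num)).add (hphase i (-1) (by norm_num))
  congr 1
  have : ∀ i, ∫ s, ((∫ y, chartIntegrand h i 1 s y) * levelPhase l s +
      (∫ y, chartIntegrand h i (-1) s y) * levelPhase l s) = ∫ z, F i z := fun i => by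
    rw [integral_add (hphase i 1 (by norm_num)) (hphase i (-1) (by norm_num)), hsum i]
  simp_rw [this]
  rw [← integral_finsetSum _ fun i _ => hFi i]
  refine integral_congr_ae (Eventually.of_forall fun z => ?_)
  simp only [hF]
  rw [← Finset.sum_mul, ← Finset.sum_mul, ← Complex.ofReal_sum, ← Finset.sum_div, ← Finset.mul_sum]
  have hn : ∑ i, z i ^ 2 = ‖z‖ ^ 2 := by
    rw [EuclideanSpace.norm_sq_eq]; simp
  rw [hn, mul_assoc]
  congr 2
  rcases eq_or_ne ‖z‖ 0 with h | h
  · simp [h]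
  · field_simp

end Coarea

section AlmostEverywhere

/-- A derivative at a point of accumulation of zeros vanishes. -/
theorem eq_zero_of_hasDerivAt_of_frequently {g : ℝ → ℂ} {g' : ℂ} {x : ℝ}
    (h : HasDerivAt g g' x) (h0 : ∃ᶠ z in 𝓝[≠] x, g z = 0) : g' = 0 := by
  by_contra hne
  exact h0 (h.eventually_ne hne)

theorem frequently_of_ae {p : ℝ → Prop} (h : ∀ᵐ x, p x) (x : ℝ) : ∃ᶠ z in 𝓝[≠] x, p z := by
  have h1 : ∀ᵐ z : ℝ, p z ∧ z ≠ x := h.and (Measure.ae_ne volume x)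
  have h2 := mem_closure_iff_frequently.1 ((Measure.dense_of_ae h1) x)
  rw [frequently_nhdsWithin_iff]
  exact h2

theorem deriv_eq_zero_or_of_ae_eq {f ρ : ℝ → ℂ} (hρ : Differentiable ℝ ρ)
    (h : f =ᵐ[volume] ρ) (x : ℝ) : deriv f x = 0 ∨ deriv f x = deriv ρ x := by
  by_cases hf : DifferentiableAt ℝ f x
  · right
    have := eq_zero_of_hasDerivAt_of_frequently (hf.hasDerivAt.sub (hρ x).hasDerivAt)
      (frequently_of_ae (h.mono fun z hz => by simp [hz]) x)
    exact sub_eq_zero.1 this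
  · exact Or.inl (deriv_zero_of_not_differentiableAt hf)

/-- If `f` agrees almost everywhere with a `C²` function `ρ`, then its (junk-valued) second
derivative agrees at each point with that of `ρ`, or vanishes. -/
theorem iteratedDeriv_two_eq_zero_or_of_ae_eq {f ρ : ℝ → ℂ} (hρ : ContDiff ℝ 2 ρ)
    (h : f =ᵐ[volume] ρ) (x : ℝ) :
    iteratedDeriv 2 f x = 0 ∨ iteratedDeriv 2 f x = iteratedDeriv 2 ρ x := by
  have e (g : ℝ → ℂ) : iteratedDeriv 2 g x = deriv (deriv g) x := by
    rw [iteratedDeriv_succ, iteratedDeriv_one]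
  rw [e, e]
  by_cases hf : DifferentiableAt ℝ (deriv f) x
  swap
  · exact Or.inl (deriv_zero_of_not_differentiableAt hf)
  by_cases hz : ∃ᶠ z in 𝓝[≠] x, deriv f z = 0
  · exact Or.inl (eq_zero_of_hasDerivAt_of_frequently hf.hasDerivAt hz)
  · right
    have hρ' : Differentiable ℝ (deriv ρ) := by
      have := hρ.differentiable_iteratedDeriv' 1
      rwa [iteratedDeriv_one] at this
    have hfr : ∃ᶠ z in 𝓝[≠] x, (deriv f - deriv ρ) z = 0 := by
      refine Eventually.frequently ?_
      filter_upwards [not_frequently.1 hz] with z hz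
      have := (deriv_eq_zero_or_of_ae_eq (hρ.differentiable (by simp)) h z).resolve_left hz
      simp [this]
    exact sub_eq_zero.1 (eq_zero_of_hasDerivAt_of_frequently
      (hf.hasDerivAt.sub (hρ' x).hasDerivAt) hfr)

theorem levelPhase_neg_eq (l s : ℝ) :
    levelPhase l (-s) = Complex.exp (((-2 * π * l * s : ℝ) : ℂ) * Complex.I) := by
  unfold levelPhase
  congr 3
  ring

theorem fourier_eq_integral_levelPhase (f : ℝ → ℂ) (s : ℝ) :
    𝓕 f s = ∫ l, f l * levelPhase l (-s) := by
  rw [fourier_real_eq_integral_exp_smul]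
  simp_rw [levelPhase_neg_eq, smul_eq_mul, mul_comm]

/-- Fourier inversion, almost everywhere, without continuity. -/
theorem ae_eq_fourier_of_integral_levelPhase {f G : ℝ → ℂ} (hf : Integrable f)
    (hG : Integrable G) (h : ∀ l, ∫ s, f s * levelPhase l s = G l) :
    f =ᵐ[volume] 𝓕 G := by
  have hG' (l : ℝ) : 𝓕 f (-l) = G l := by
    rw [fourier_eq_integral_levelPhase, ← h]
    congr 1
    ext s
    unfold levelPhase
    congr 4
    ring
  have hcont : Continuous (𝓕 G) :=
    VectorFourier.fourierIntegral_continuous Real.continuous_fourierChar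
      (by exact continuous_inner) hG
  refine ae_eq_of_integral_contDiff_smul_eq hf.locallyIntegrable hcont.locallyIntegrable
    fun g hg hgc => ?_
  have hφ1 : HasCompactSupport (fun x => (g x : ℂ)) := hgc.comp_left (g := ((↑) : ℝ → ℂ)) (by simp)
  have hφ2 : ContDiff ℝ (⊤ : ℕ∞) (fun x => (g x : ℂ)) := Complex.ofRealCLM.contDiff.comp hg
  set φ : SchwartzMap ℝ ℂ := hφ1.toSchwartzMap hφ2 with hφ
  have hφx (x : ℝ) : φ x = g x := rfl
  have flip {u v : ℝ → ℂ} (hu : Integrable u) (hv : Integrable v) :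
      ∫ x, 𝓕 u x * v x = ∫ x, u x * 𝓕 v x := by
    simpa using! VectorFourier.integral_fourierIntegral_smul_eq_flip (L := innerₗ ℝ)
      Real.continuous_fourierChar continuous_inner hu hv
  have hinv : 𝓕 ((𝓕⁻ φ : SchwartzMap ℝ ℂ) : ℝ → ℂ) = φ := by
    rw [← SchwartzMap.fourier_coe, FourierTransform.fourier_fourierInv_eq]
  symm
  calc ∫ x, g x • 𝓕 G x = ∫ x, φ x * 𝓕 G x := by
        simp_rw [hφx, Complex.real_smul]
    _ = ∫ x, 𝓕 (φ : ℝ → ℂ) x * G x := (flip φ.integrable hG).symm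
    _ = ∫ x, 𝓕⁻ (φ : ℝ → ℂ) (-x) * 𝓕 f (-x) := by
        simp_rw [hG', fourierInv_eq_fourier_neg, neg_neg]
    _ = ∫ x, 𝓕⁻ (φ : ℝ → ℂ) x * 𝓕 f x :=
        integral_neg_eq_self (fun x => 𝓕⁻ (φ : ℝ → ℂ) x * 𝓕 f x) volume
    _ = ∫ x, 𝓕 ((𝓕⁻ φ : SchwartzMap ℝ ℂ) : ℝ → ℂ) x * f x := by
        rw [flip (SchwartzMap.integrable _) hf, SchwartzMap.fourierInv_coe]
    _ = ∫ x, g x • f x := by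
        rw [hinv]; simp_rw [hφx, Complex.real_smul]

theorem norm_iteratedDeriv_two_le {f G : ℝ → ℂ} (hf : Integrable f)
    (h : ∀ l, ∫ s, f s * levelPhase l s = G l)
    (hG : ∀ k : ℕ, k ≤ 2 → Integrable (fun l => ((l ^ k : ℝ) : ℂ) * G l)) (s : ℝ) :
    ‖iteratedDeriv 2 f s‖ ≤
      4 * π ^ 2 * ‖∫ l, ((l ^ 2 : ℝ) : ℂ) * G l * levelPhase l (-s)‖ := by
  have hG0 : Integrable G := by simpa using hG 0 (by simp)
  have hGs : ∀ k : ℕ, (k : ℕ∞) ≤ (2 : ℕ∞) → Integrable (fun x : ℝ => x ^ k • G x) := by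
    intro k hk
    have := hG k (by exact_mod_cast hk)
    simpa [Complex.real_smul] using this
  have hGn : ∀ k : ℕ, (k : ℕ∞) ≤ (2 : ℕ∞) → Integrable (fun x : ℝ => ‖x‖ ^ k * ‖G x‖) := by
    intro k hk
    convert! (hGs k hk).norm with x
    simp
  have hcd : ContDiff ℝ 2 (𝓕 G) := by exact_mod_cast contDiff_fourier hGn
  have hd : iteratedDeriv 2 (𝓕 G) s =
      (-(4 * π ^ 2 : ℝ) : ℂ) * ∫ l, ((l ^ 2 : ℝ) : ℂ) * G l * levelPhase l (-s) := by
    rw [iteratedDeriv_fourier (N := 2) hGs (by simp), fourier_eq_integral_levelPhase,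
      ← integral_const_mul]
    congr 1
    ext l
    rw [smul_eq_mul, mul_pow, mul_pow, Complex.I_sq]
    push_cast
    ring
  rcases iteratedDeriv_two_eq_zero_or_of_ae_eq hcd
    (ae_eq_fourier_of_integral_levelPhase hf hG0 h) s with h0 | h0
  · rw [h0, norm_zero]; positivity
  · rw [h0, hd, norm_mul, norm_neg, Complex.norm_real, norm_of_nonneg (by positivity)]

end AlmostEverywhere

section Nonstationary

variable {E P ι : Type*} [NormedAddCommGroup E] [NormedSpace ℝ E]
  [NormedAddCommGroup P] [NormedSpace ℝ P] [Fintype ι]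

/-- The derivative of a phase, depending on a parameter, along a direction in the space variable. -/
def phaseDeriv (φ : E × P → ℝ) (v : E) (q : E × P) : ℝ := fderiv ℝ φ q (v, 0)

/-- The sum of the squares of the derivatives of the phase along given directions. -/
def phaseGradSq (φ : E × P → ℝ) (e : ι → E) (q : E × P) : ℝ := ∑ j, phaseDeriv φ (e j) q ^ 2

theorem contDiff_phaseDeriv {φ : E × P → ℝ} (hφ : ContDiff ℝ (⊤ : ℕ∞) φ) (v : E) :
    ContDiff ℝ (⊤ : ℕ∞) (phaseDeriv φ v) :=
  (hφ.fderiv_right (by simp)).clm_apply contDiff_const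

theorem contDiff_phaseGradSq {φ : E × P → ℝ} (hφ : ContDiff ℝ (⊤ : ℕ∞) φ) (e : ι → E) :
    ContDiff ℝ (⊤ : ℕ∞) (phaseGradSq φ e) :=
  ContDiff.sum fun j _ => (contDiff_phaseDeriv hφ (e j)).pow 2

theorem fderiv_slice {F : Type*} [NormedAddCommGroup F] [NormedSpace ℝ F] {f : E × P → F}
    {z : E} {p : P} (hf : DifferentiableAt ℝ f (z, p)) (v : E) :
    fderiv ℝ (fun z => f (z, p)) z v = fderiv ℝ f (z, p) (v, 0) := by
  have h : HasFDerivAt (fun z : E => (z, p)) (ContinuousLinearMap.inl ℝ E P) z := by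
    exact hasFDerivAt_prodMk_left z p
  have := (hf.hasFDerivAt.comp z h).fderiv
  rw [show (fun z => f (z, p)) = f ∘ fun z => (z, p) from rfl, this]
  simp

theorem contDiff_slice {f : E × P → ℂ} {U : Set (E × P)} (hU : IsOpen U)
    (hf : ContDiffOn ℝ (⊤ : ℕ∞) f U) {Z : Set E} (hZ : IsClosed Z)
    (hfZ : ∀ q, f q ≠ 0 → q.1 ∈ Z) {p : P} (hp : ∀ z ∈ Z, (z, p) ∈ U) (z : E) :
    ContDiffAt ℝ (⊤ : ℕ∞) f (z, p) := by
  by_cases hz : z ∈ Z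
  · exact (hf _ (hp z hz)).contDiffAt (hU.mem_nhds (hp z hz))
  · have : f =ᶠ[nhds (z, p)] fun _ => 0 := by
      have : (Prod.fst ⁻¹' Zᶜ : Set (E × P)) ∈ nhds (z, p) :=
        (hZ.isOpen_compl.preimage continuous_fst).mem_nhds hz
      filter_upwards [this] with q hq
      by_contra h
      exact hq (hfZ q h)
    exact contDiffAt_const.congr_of_eventuallyEq this

theorem fderiv_eq_zero_of_notMem {f : E × P → ℂ} {Z : Set E} (hZ : IsClosed Z)
    (hfZ : ∀ q, f q ≠ 0 → q.1 ∈ Z) {q : E × P} (hq : q.1 ∉ Z) : fderiv ℝ f q = 0 := by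
  have : f =ᶠ[nhds q] fun _ => 0 := by
    have : (Prod.fst ⁻¹' Zᶜ : Set (E × P)) ∈ nhds q :=
      (hZ.isOpen_compl.preimage continuous_fst).mem_nhds hq
    filter_upwards [this] with q hq
    by_contra h
    exact hq (hfZ q h)
  rw [this.fderiv_eq]
  simp

variable [FiniteDimensional ℝ E] [MeasurableSpace E] [BorelSpace E]
  (μ : Measure E) [μ.IsAddHaarMeasure]

/-- One integration by parts along a single direction. -/
theorem integral_mul_phaseDeriv_eq {φ : E × P → ℝ} (hφ : ContDiff ℝ (⊤ : ℕ∞) φ)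
    {f : E × P → ℂ} {U : Set (E × P)} (hU : IsOpen U)
    (hf : ContDiffOn ℝ (⊤ : ℕ∞) f U) {Z : Set E} (hZ : IsCompact Z)
    (hfZ : ∀ q, f q ≠ 0 → q.1 ∈ Z) {p : P} (hp : ∀ z ∈ Z, (z, p) ∈ U) (v : E) (L : ℝ) :
    Complex.I * L * ∫ z, f (z, p) * phaseDeriv φ v (z, p) *
        Complex.exp ((L * φ (z, p) : ℝ) * Complex.I) ∂μ =
      - ∫ z, fderiv ℝ f (z, p) (v, 0) * Complex.exp ((L * φ (z, p) : ℝ) * Complex.I) ∂μ ∧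
    Integrable (fun z => f (z, p) * phaseDeriv φ v (z, p) *
        Complex.exp ((L * φ (z, p) : ℝ) * Complex.I)) μ ∧
    Integrable (fun z => fderiv ℝ f (z, p) (v, 0) *
        Complex.exp ((L * φ (z, p) : ℝ) * Complex.I)) μ := by
  set g : E → ℂ := fun z => Complex.exp ((L * φ (z, p) : ℝ) * Complex.I) with hg
  have hsl := contDiff_slice hU hf hZ.isClosed hfZ hp
  have hf1 : ContDiff ℝ (⊤ : ℕ∞) fun z => f (z, p) := by
    rw [contDiff_iff_contDiffAt]
    intro z
    exact (hsl z).comp z (by fun_prop)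
  have hφp : ContDiff ℝ (⊤ : ℕ∞) fun z => φ (z, p) := hφ.comp (by fun_prop)
  have hgs : ContDiff ℝ (⊤ : ℕ∞) g := by
    refine ((Complex.ofRealCLM.contDiff.comp (contDiff_const.mul hφp)).mul contDiff_const).cexp
  have hdg (z : E) : fderiv ℝ g z v = Complex.I * L * phaseDeriv φ v (z, p) * g z := by
    have h1 : HasFDerivAt (fun z => L * φ (z, p)) (L • fderiv ℝ (fun z => φ (z, p)) z) z :=
      ((hφp.differentiable (by simp)) z).hasFDerivAt.const_mul L
    have h2 := ((Complex.ofRealCLM.hasFDerivAt.comp z h1).mul_const Complex.I).cexp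
    have h3 : HasFDerivAt g _ z := h2
    rw [h3.fderiv]
    simp only [phaseDeriv, ← fderiv_slice (hφ.differentiable (by simp) (z, p))]
    simp [hg]
    ring
  have hd (z : E) : fderiv ℝ (fun z => f (z, p)) z v = fderiv ℝ f (z, p) (v, 0) :=
    fderiv_slice ((hsl z).differentiableAt (by simp)) v
  have hcs : HasCompactSupport fun z => f (z, p) :=
    HasCompactSupport.intro hZ fun z hz => by
      by_contra h
      exact hz (hfZ _ h)
  have hcs' : HasCompactSupport fun z => fderiv ℝ (fun z => f (z, p)) z v :=
    hcs.fderiv_apply ℝ v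
  have hgc : Continuous g := hgs.continuous
  have hfc := hf1.continuous
  have hf'c : Continuous fun z => fderiv ℝ (fun z => f (z, p)) z v :=
    (hf1.continuous_fderiv (by simp)).clm_apply continuous_const
  have hg'c : Continuous fun z => fderiv ℝ g z v :=
    (hgs.continuous_fderiv (by simp)).clm_apply continuous_const
  have hpd : Continuous fun z => (phaseDeriv φ v (z, p) : ℂ) :=
    Complex.continuous_ofReal.comp
      ((contDiff_phaseDeriv hφ v).continuous.comp (by fun_prop))
  have i1 : Integrable (fun z => fderiv ℝ (fun z => f (z, p)) z v * g z) μ :=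
    (hf'c.mul hgc).integrable_of_hasCompactSupport hcs'.mul_right
  have i2 : Integrable (fun z => f (z, p) * fderiv ℝ g z v) μ :=
    (hfc.mul hg'c).integrable_of_hasCompactSupport hcs.mul_right
  have i3 : Integrable (fun z => f (z, p) * g z) μ :=
    (hfc.mul hgc).integrable_of_hasCompactSupport hcs.mul_right
  have i4 : Integrable (fun z => f (z, p) * phaseDeriv φ v (z, p) * g z) μ :=
    ((hfc.mul hpd).mul hgc).integrable_of_hasCompactSupport hcs.mul_right.mul_right
  refine ⟨?_, i4, by simpa only [hd] using i1⟩
  have key := integral_mul_fderiv_eq_neg_fderiv_mul_of_integrable i1 i2 i3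
    (fun z _ => hf1.differentiable (by simp) z) (fun z _ => hgs.differentiable (by simp) z)
  simp only [hd] at key
  rw [← key, ← integral_const_mul]
  congr 1
  ext z
  rw [hdg]
  ring

/-- Nonstationary phase, uniformly for parameters in a compact set. -/
theorem norm_integral_le_of_nonstationary {φ : E × P → ℝ} (hφ : ContDiff ℝ (⊤ : ℕ∞) φ)
    (e : ι → E) {Z : Set E} (hZ : IsCompact Z) {K : Set P} (hK : IsCompact K)
    (hZK : ∀ z ∈ Z, ∀ p ∈ K, phaseGradSq φ e (z, p) ≠ 0) (N : ℕ) :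
    ∀ A : E × P → ℂ, ContDiffOn ℝ (⊤ : ℕ∞) A {q | phaseGradSq φ e q ≠ 0} →
      (∀ q, A q ≠ 0 → q.1 ∈ Z) →
      ∃ C : ℝ, 0 ≤ C ∧ ∀ p ∈ K, ∀ L : ℝ, 0 < L →
        L ^ N * ‖∫ z, A (z, p) * Complex.exp ((L * φ (z, p) : ℝ) * Complex.I) ∂μ‖ ≤ C := by
  have hU : IsOpen {q : E × P | phaseGradSq φ e q ≠ 0} :=
    isOpen_ne_fun (contDiff_phaseGradSq hφ e).continuous continuous_const
  induction N with
  | zero =>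
    intro A hA hAZ
    have hc : ContinuousOn A (Z ×ˢ K) :=
      hA.continuousOn.mono fun q hq => hZK q.1 hq.1 q.2 hq.2
    obtain ⟨B, hB⟩ := (hZ.prod hK).exists_bound_of_continuousOn hc
    refine ⟨|B| * μ.real Z, by positivity, fun p hp L _ => ?_⟩
    rw [pow_zero, one_mul]
    have h0 : ∀ z, z ∉ Z → A (z, p) * Complex.exp ((L * φ (z, p) : ℝ) * Complex.I) = 0 := by
      intro z hz
      have : A (z, p) = 0 := by
        by_contra h
        exact hz (hAZ _ h)
      rw [this, zero_mul]
    rw [← setIntegral_eq_integral_of_forall_compl_eq_zero h0]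
    refine norm_setIntegral_le_of_norm_le_const hZ.measure_lt_top fun z hz => ?_
    rw [norm_mul, Complex.norm_exp_ofReal_mul_I, mul_one]
    exact (hB (z, p) ⟨hz, hp⟩).trans (le_abs_self B)
  | succ N ih =>
    intro A hA hAZ
    set X : ι → E × P → ℂ := fun j q =>
      A q * ((phaseDeriv φ (e j) q / phaseGradSq φ e q : ℝ) : ℂ) with hX
    have hXs (j : ι) : ContDiffOn ℝ (⊤ : ℕ∞) (X j) {q | phaseGradSq φ e q ≠ 0} :=
      hA.mul (Complex.ofRealCLM.contDiff.comp_contDiffOn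
        ((contDiff_phaseDeriv hφ (e j)).contDiffOn.div
          (contDiff_phaseGradSq hφ e).contDiffOn fun q hq => hq))
    have hXZ (j : ι) : ∀ q, X j q ≠ 0 → q.1 ∈ Z := fun q hq => hAZ q (left_ne_zero_of_mul hq)
    obtain ⟨C, hC0, hC⟩ := ih (fun q => ∑ j, fderiv ℝ (X j) q (e j, 0))
      (ContDiffOn.sum fun j _ =>
        ((hXs j).fderiv_of_isOpen hU (by simp)).clm_apply contDiffOn_const)
      (fun q hq => by
        by_contra h
        exact hq (Finset.sum_eq_zero fun j _ => by
          rw [fderiv_eq_zero_of_notMem hZ.isClosed (hXZ j) h]; simp))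
    refine ⟨C, hC0, fun p hp L hL => ?_⟩
    have key (j : ι) := integral_mul_phaseDeriv_eq μ hφ hU (hXs j) hZ (hXZ j)
      (fun z hz => hZK z hz p hp) (e j) L
    have hsum : Complex.I * L *
        ∫ z, A (z, p) * Complex.exp ((L * φ (z, p) : ℝ) * Complex.I) ∂μ =
        - ∫ z, (∑ j, fderiv ℝ (X j) (z, p) (e j, 0)) *
          Complex.exp ((L * φ (z, p) : ℝ) * Complex.I) ∂μ := by
      simp_rw [Finset.sum_mul]
      rw [integral_finsetSum _ fun j _ => (key j).2.2, ← Finset.sum_neg_distrib,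
        ← Finset.sum_congr rfl fun j _ => (key j).1, ← Finset.mul_sum,
        ← integral_finsetSum _ fun j _ => (key j).2.1]
      congr 2
      ext z
      rw [← Finset.sum_mul]
      congr 1
      by_cases hz : z ∈ Z
      · have hne := hZK z hz p hp
        simp only [hX]
        simp_rw [mul_assoc, ← Complex.ofReal_mul]
        rw [← Finset.mul_sum, ← Complex.ofReal_sum]
        have : ∑ j, phaseDeriv φ (e j) (z, p) / phaseGradSq φ e (z, p) *
            phaseDeriv φ (e j) (z, p) = 1 := by
          simp_rw [div_mul_eq_mul_div, ← sq]
          rw [← Finset.sum_div]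
          exact div_self hne
        rw [this]
        simp
      · have : A (z, p) = 0 := by
          by_contra h
          exact hz (hAZ _ h)
        simp [hX, this]
    have hn := congrArg norm hsum
    rw [norm_neg, norm_mul, norm_mul, Complex.norm_I, one_mul, Complex.norm_real,
      norm_of_nonneg hL.le] at hn
    rw [pow_succ, mul_assoc, hn]
    exact hC p hp L hL

end Nonstationary

section Oscillatory

variable {m : ℕ}

/-- The oscillatory integral with amplitude `a` and phase `⟪z, w⟫ + l g(z)`. -/
def oscIntegral (a : Spacetime m → ℂ) (w : Spacetime m) (l : ℝ) : ℂ :=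
  ∫ z, a z * Complex.exp ((2 * π * (⟪z, w⟫ + l * waveSymbol z) : ℝ) * Complex.I)

theorem contDiff_waveSymbol : ContDiff ℝ (⊤ : ℕ∞) (waveSymbol : Spacetime m → ℝ) := by
  have : (waveSymbol : Spacetime m → ℝ) = fun z => ∑ i, signature m i * z i ^ 2 :=
    funext waveSymbol_eq_sum
  rw [this]
  fun_prop

/-- The phase `⟪z, α⟫ + β g(z)` with normalized parameters. -/
def wavePhase (q : Spacetime m × (Spacetime m × ℝ)) : ℝ :=
  2 * π * (⟪q.1, q.2.1⟫ + q.2.2 * waveSymbol q.1)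

theorem contDiff_wavePhase :
    ContDiff ℝ (⊤ : ℕ∞) (wavePhase : Spacetime m × (Spacetime m × ℝ) → ℝ) := by
  unfold wavePhase
  refine contDiff_const.mul (ContDiff.add ?_ (ContDiff.mul (by fun_prop) ?_))
  · exact contDiff_fst.inner ℝ (contDiff_fst.comp contDiff_snd)
  · exact contDiff_waveSymbol.comp contDiff_fst

theorem phaseDeriv_wavePhase (i : Fin (m + 1)) (z α : Spacetime m) (β : ℝ) :
    phaseDeriv wavePhase (EuclideanSpace.single i 1) (z, (α, β)) =
      2 * π * (α i + 2 * β * (signature m i * z i)) := by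
  unfold phaseDeriv
  rw [← fderiv_slice (contDiff_wavePhase.differentiable (by simp) _)]
  have h1 : HasFDerivAt (fun z : Spacetime m => ∑ j, signature m j * z j ^ 2)
      (∑ j, signature m j • (2 * z j) • (EuclideanSpace.proj j : Spacetime m →L[ℝ] ℝ)) z := by
    refine HasFDerivAt.fun_sum fun j _ => ?_
    have hp : HasFDerivAt (fun z : Spacetime m => z j)
        (EuclideanSpace.proj j : Spacetime m →L[ℝ] ℝ) z :=
      (EuclideanSpace.proj j : Spacetime m →L[ℝ] ℝ).hasFDerivAt
    have := (hp.pow 2).const_mul (signature m j)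
    simpa using this
  have h2 : HasFDerivAt (fun z : Spacetime m => ⟪z, α⟫) (innerSL ℝ α) z := by
    have := (innerSL ℝ α).hasFDerivAt (x := z)
    simpa [real_inner_comm] using! this
  have h3 := (h2.add (h1.const_mul β)).const_mul (2 * π)
  have e : (fun z => wavePhase (z, (α, β))) =
      fun z : Spacetime m => 2 * π * (⟪z, α⟫ + β * ∑ j, signature m j * z j ^ 2) := by
    ext z
    simp [wavePhase, waveSymbol_eq_sum]
  have h4 := h3.fderiv
  simp only [Pi.add_apply] at h4
  rw [e, h4]
  simp [EuclideanSpace.inner_single_right]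
  ring

/-- The annulus carrying the amplitudes. -/
def annulus (m : ℕ) : Set (Spacetime m) := {z | 1 / 4 ≤ ‖z‖ ∧ ‖z‖ ≤ 5 / 4}

theorem isCompact_annulus : IsCompact (annulus m) := by
  refine (isCompact_closedBall (0 : Spacetime m) (5 / 4)).of_isClosed_subset ?_ fun z hz => ?_
  · exact (isClosed_le continuous_const continuous_norm).inter
      (isClosed_le continuous_norm continuous_const)
  · simpa using hz.2

/-- The normalized frequencies for which the phase has no critical point in the annulus. -/
def nonstationarySet (m : ℕ) : Set (Spacetime m × ℝ) :=
  {p | ‖p.1‖ + |p.2| = 1 ∧ (|p.2| ≤ ‖p.1‖ / 5 ∨ 4 * ‖p.1‖ ≤ |p.2|)}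

theorem isCompact_nonstationarySet : IsCompact (nonstationarySet m) := by
  refine (isCompact_closedBall (0 : Spacetime m × ℝ) 1).of_isClosed_subset ?_ fun p hp => ?_
  · have h1 : Continuous fun p : Spacetime m × ℝ => ‖p.1‖ := by fun_prop
    have h2 : Continuous fun p : Spacetime m × ℝ => |p.2| := by fun_prop
    exact (isClosed_eq (h1.add h2) continuous_const).inter
      ((isClosed_le h2 (h1.div_const 5)).union (isClosed_le (continuous_const.mul h1) h2))
  · rw [mem_closedBall_zero_iff, Prod.norm_def, max_le_iff, Real.norm_eq_abs]
    have h1 := hp.1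
    constructor <;> linarith [norm_nonneg p.1, abs_nonneg p.2]

theorem phaseGradSq_ne_zero {z : Spacetime m} (hz : z ∈ annulus m) {p : Spacetime m × ℝ}
    (hp : p ∈ nonstationarySet m) :
    phaseGradSq wavePhase (fun i : Fin (m + 1) => EuclideanSpace.single i (1 : ℝ)) (z, p) ≠ 0 := by
  obtain ⟨α, β⟩ := p
  obtain ⟨hz1, hz2⟩ := hz
  obtain ⟨h1, h2⟩ := hp
  simp only at h1 h2
  intro h0
  unfold phaseGradSq at h0
  rw [Finset.sum_eq_zero_iff_of_nonneg fun _ _ => sq_nonneg _] at h0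
  have h3 (i : Fin (m + 1)) : α i ^ 2 = (2 * β) ^ 2 * z i ^ 2 := by
    have := h0 i (Finset.mem_univ i)
    rw [phaseDeriv_wavePhase, sq_eq_zero_iff] at this
    have h4 : α i = -(2 * β * (signature m i * z i)) := by
      have := (mul_eq_zero.1 this).resolve_left (by positivity)
      linarith
    rw [h4]
    linear_combination (2 * β) ^ 2 * z i ^ 2 * signature_mul_self (m := m) i
  have h5 : ‖α‖ = 2 * |β| * ‖z‖ := by
    have : ‖α‖ ^ 2 = (2 * |β| * ‖z‖) ^ 2 := by
      rw [mul_pow, mul_pow, sq_abs, EuclideanSpace.real_norm_sq_eq, EuclideanSpace.real_norm_sq_eq,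
        Finset.sum_congr rfl fun i _ => h3 i, ← Finset.mul_sum]
      ring
    exact (pow_left_inj₀ (norm_nonneg _) (by positivity) two_ne_zero).1 this
  have hb := abs_nonneg β
  have h6 : |β| * ‖z‖ ≤ |β| * (5 / 4) := mul_le_mul_of_nonneg_left hz2 hb
  have h7 : |β| * (1 / 4) ≤ |β| * ‖z‖ := mul_le_mul_of_nonneg_left hz1 hb
  rcases h2 with h2 | h2 <;> linarith

theorem norm_oscIntegral_le (a : Spacetime m → ℂ) (w : Spacetime m) (l : ℝ) :
    ‖oscIntegral a w l‖ ≤ ∫ z, ‖a z‖ := by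
  refine (norm_integral_le_integral_norm _).trans (le_of_eq ?_)
  simp_rw [norm_mul, Complex.norm_exp_ofReal_mul_I, mul_one]

/-- Rapid decay of the oscillatory integral away from the stationary region. -/
theorem exists_norm_oscIntegral_le {a : Spacetime m → ℂ} (ha : ContDiff ℝ (⊤ : ℕ∞) a)
    (haZ : ∀ z, a z ≠ 0 → z ∈ annulus m) (N : ℕ) :
    ∃ C : ℝ, 0 ≤ C ∧ ∀ (w : Spacetime m) (l : ℝ), |l| ≤ ‖w‖ / 5 ∨ 4 * ‖w‖ ≤ |l| →
      (1 + ‖w‖ + |l|) ^ N * ‖oscIntegral a w l‖ ≤ C := by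
  obtain ⟨C, hC0, hC⟩ := norm_integral_le_of_nonstationary volume contDiff_wavePhase
    (fun i : Fin (m + 1) => EuclideanSpace.single i (1 : ℝ)) isCompact_annulus
    isCompact_nonstationarySet (fun z hz p hp => phaseGradSq_ne_zero hz hp) N
    (fun q => a q.1) (ha.comp contDiff_fst).contDiffOn (fun q hq => haZ q.1 hq)
  refine ⟨2 ^ N * (C + ∫ z, ‖a z‖), by positivity, fun w l hwl => ?_⟩
  set L := ‖w‖ + |l| with hL
  have hL0 : 0 ≤ L := by positivity
  have hI0 : 0 ≤ ∫ z, ‖a z‖ := by positivity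
  rcases le_total L 1 with h1 | h1
  · gcongr
    · linarith
    · linarith [norm_oscIntegral_le a w l]
  · have hLp : 0 < L := by linarith
    have hmem : (L⁻¹ • w, L⁻¹ * l) ∈ nonstationarySet m := by
      refine ⟨?_, ?_⟩
      · simp only [norm_smul, norm_inv, Real.norm_eq_abs, abs_mul, abs_inv, abs_of_pos hLp]
        rw [← mul_add, ← hL, inv_mul_cancel₀ hLp.ne']
      · simp only [norm_smul, norm_inv, Real.norm_eq_abs, abs_mul, abs_inv, abs_of_pos hLp]
        refine hwl.imp (fun h => ?_) fun h => ?_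
        · rw [mul_div_assoc]; gcongr
        · rw [mul_left_comm]; gcongr
    have := hC _ hmem L hLp
    have e : oscIntegral a w l = ∫ z, a z *
        Complex.exp ((L * wavePhase (z, (L⁻¹ • w, L⁻¹ * l)) : ℝ) * Complex.I) := by
      unfold oscIntegral
      congr 1
      ext z
      congr 4
      simp only [wavePhase, inner_smul_right]
      field_simp
    rw [← e] at this
    calc (1 + ‖w‖ + |l|) ^ N * ‖oscIntegral a w l‖ ≤ (2 * L) ^ N * ‖oscIntegral a w l‖ := by
          gcongr; linarith
      _ = 2 ^ N * (L ^ N * ‖oscIntegral a w l‖) := by rw [mul_pow, mul_assoc]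
      _ ≤ _ := by gcongr; linarith

theorem continuous_oscIntegral {a : Spacetime m → ℂ} (ha : Integrable a) (w : Spacetime m) :
    Continuous (oscIntegral a w) := by
  refine continuous_of_dominated (bound := fun z => ‖a z‖) (fun l => ?_) (fun l => ?_) ha.norm ?_
  · have : Continuous (waveSymbol : Spacetime m → ℝ) := contDiff_waveSymbol.continuous
    exact ha.1.mul (by fun_prop)
  · refine Eventually.of_forall fun z => ?_
    rw [norm_mul, Complex.norm_exp_ofReal_mul_I, mul_one]
  · exact Eventually.of_forall fun z => by fun_prop

theorem integrable_pow_mul_oscIntegral {a : Spacetime m → ℂ} (ha : ContDiff ℝ (⊤ : ℕ∞) a)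
    (haZ : ∀ z, a z ≠ 0 → z ∈ annulus m) (hai : Integrable a) (w : Spacetime m) {k : ℕ}
    (hk : k ≤ 2) : Integrable (fun l : ℝ => ((l ^ k : ℝ) : ℂ) * oscIntegral a w l) := by
  obtain ⟨C, hC0, hC⟩ := exists_norm_oscIntegral_le ha haZ 4
  have hcont : Continuous fun l : ℝ => ((l ^ k : ℝ) : ℂ) * oscIntegral a w l := by
    have := continuous_oscIntegral hai w
    fun_prop
  refine hcont.locallyIntegrable.integrable_of_isBigO_cocompact (g := fun l => (1 + l ^ 2)⁻¹)
    ?_ (integrable_inv_one_add_sq.integrableAtFilter _)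
  refine Asymptotics.IsBigO.of_bound C ?_
  have hev : ∀ᶠ l : ℝ in cocompact ℝ, 4 * ‖w‖ ≤ ‖l‖ :=
    tendsto_norm_cocompact_atTop.eventually_ge_atTop _
  filter_upwards [hev] with l hl
  rw [norm_mul, Complex.norm_real, norm_inv, norm_of_nonneg (by positivity : 0 ≤ 1 + l ^ 2),
    ← div_eq_mul_inv, le_div_iff₀ (by positivity), norm_pow]
  refine le_trans ?_ (hC w l (Or.inr hl))
  rw [mul_right_comm]
  gcongr
  rw [← sq_abs l, Real.norm_eq_abs]
  have hl0 := abs_nonneg l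
  have hp : |l| ^ k ≤ (1 + ‖w‖ + |l|) ^ 2 := by
    calc |l| ^ k ≤ (1 + ‖w‖ + |l|) ^ k := by gcongr; linarith [norm_nonneg w]
      _ ≤ _ := pow_le_pow_right₀ (by linarith [norm_nonneg w]) hk
  have hq : 1 + |l| ^ 2 ≤ (1 + ‖w‖ + |l|) ^ 2 := by nlinarith [norm_nonneg w]
  calc |l| ^ k * (1 + |l| ^ 2) ≤ (1 + ‖w‖ + |l|) ^ 2 * (1 + ‖w‖ + |l|) ^ 2 := by gcongr
    _ = _ := by ring

end Oscillatory

section Gaussian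

variable {m : ℕ}

theorem integrable_gaussian_spacetime {b : Fin (m + 1) → ℂ} (hb : ∀ i, 0 < (b i).re)
    (c : Fin (m + 1) → ℂ) : Integrable fun z : Spacetime m =>
      Complex.exp (-∑ i, b i * (z i : ℂ) ^ 2 + ∑ i, c i * z i) := by
  rw [← (PiLp.volume_preserving_toLp (Fin (m + 1))).integrable_comp_emb
    (MeasurableEquiv.toLp 2 _).measurableEmbedding]
  exact GaussianFourier.integrable_cexp_neg_sum_mul_add hb c

theorem integral_gaussian_spacetime {b : Fin (m + 1) → ℂ} (hb : ∀ i, 0 < (b i).re)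
    (c : Fin (m + 1) → ℂ) :
    ∫ z : Spacetime m, Complex.exp (-∑ i, b i * (z i : ℂ) ^ 2 + ∑ i, c i * z i) =
      ∏ i, (π / b i) ^ (1 / 2 : ℂ) * Complex.exp (c i ^ 2 / (4 * b i)) := by
  rw [← GaussianFourier.integral_cexp_neg_sum_mul_add hb,
    ← (PiLp.volume_preserving_toLp (Fin (m + 1))).integral_comp
    (MeasurableEquiv.toLp 2 _).measurableEmbedding]

/-- The damped quadratic coefficients `δ - 2 i l ε_j`. -/
def dampedCoeff (m : ℕ) (l δ : ℝ) (i : Fin (m + 1)) : ℂ :=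
  δ - 2 * Complex.I * l * signature m i

theorem dampedCoeff_re (l δ : ℝ) (i : Fin (m + 1)) : (dampedCoeff m l δ i).re = δ := by
  simp [dampedCoeff, Complex.mul_re, Complex.mul_im]

theorem dampedCoeff_ne_zero {l : ℝ} (hl : 0 < l) (δ : ℝ) (i : Fin (m + 1)) :
    dampedCoeff m l δ i ≠ 0 := by
  intro h
  have := congrArg Complex.im h
  rcases signature_eq_or i with h1 | h1 <;>
    simp [dampedCoeff, Complex.mul_re, Complex.mul_im, h1, hl.ne'] at this

/-- A damped version of the function `exp (2 π i (⟪z, w⟫ + l g(z)))`. -/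
def dampedPhase (w : Spacetime m) (l δ : ℝ) (z : Spacetime m) : ℂ :=
  Complex.exp (-∑ i, (π * dampedCoeff m l δ i) * (z i : ℂ) ^ 2 +
    ∑ i, (2 * π * Complex.I * w i) * z i)

theorem inner_eq_sum (z w : Spacetime m) : ⟪z, w⟫ = ∑ i, w i * z i := by
  simp [PiLp.inner_apply]

theorem dampedPhase_eq (w : Spacetime m) (l δ : ℝ) (z : Spacetime m) :
    dampedPhase w l δ z = (Real.exp (-(π * δ * ‖z‖ ^ 2)) : ℝ) *
      Complex.exp ((2 * π * (⟪z, w⟫ + l * waveSymbol z) : ℝ) * Complex.I) := by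
  rw [Complex.ofReal_exp, ← Complex.exp_add, dampedPhase]
  congr 1
  rw [EuclideanSpace.real_norm_sq_eq, waveSymbol_eq_sum, inner_eq_sum]
  push_cast
  simp only [Finset.mul_sum, Finset.sum_mul, ← Finset.sum_neg_distrib, ← Finset.sum_add_distrib,
    mul_add, add_mul]
  refine Finset.sum_congr rfl fun i _ => ?_
  rw [dampedCoeff]
  ring

theorem fourier_dampedPhase (w : Spacetime m) (l : ℝ) {δ : ℝ} (hδ : 0 < δ) (ζ : Spacetime m) :
    𝓕 (dampedPhase w l δ) ζ = (∏ i, (1 / dampedCoeff m l δ i) ^ (1 / 2 : ℂ)) *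
      Complex.exp (∑ i, -(π * ((w - ζ) i : ℂ) ^ 2 / dampedCoeff m l δ i)) := by
  have hb (i : Fin (m + 1)) : 0 < ((π : ℂ) * dampedCoeff m l δ i).re := by
    rw [Complex.re_ofReal_mul, dampedCoeff_re]
    positivity
  have hne (i : Fin (m + 1)) : dampedCoeff m l δ i ≠ 0 := by
    intro h
    have := dampedCoeff_re (m := m) l δ i
    rw [h] at this
    exact hδ.ne this
  rw [Real.fourier_eq']
  have e (z : Spacetime m) : Complex.exp ((-2 * π * ⟪z, ζ⟫ : ℝ) * Complex.I) •
      dampedPhase w l δ z = Complex.exp (-∑ i, (π * dampedCoeff m l δ i) * (z i : ℂ) ^ 2 +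
        ∑ i, (2 * π * Complex.I * (w - ζ) i) * z i) := by
    rw [smul_eq_mul, dampedPhase, ← Complex.exp_add, inner_eq_sum]
    congr 1
    push_cast
    simp only [Finset.mul_sum, Finset.sum_mul, ← Finset.sum_neg_distrib,
      ← Finset.sum_add_distrib]
    refine Finset.sum_congr rfl fun i _ => ?_
    simp
    ring
  simp_rw [e]
  rw [integral_gaussian_spacetime hb, Finset.prod_mul_distrib, ← Complex.exp_sum]
  congr 1
  · refine Finset.prod_congr rfl fun i _ => ?_
    congr 1
    have := hne i
    have : (π : ℂ) ≠ 0 := by exact_mod_cast pi_ne_zero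
    field_simp
  · congr 1
    refine Finset.sum_congr rfl fun i _ => ?_
    have := hne i
    have : (π : ℂ) ≠ 0 := by exact_mod_cast pi_ne_zero
    have h2 : (2 * π * Complex.I * (w - ζ) i : ℂ) ^ 2 = -(4 * π ^ 2 * ((w - ζ) i : ℂ) ^ 2) := by
      rw [mul_pow, mul_pow, Complex.I_sq]; ring
    rw [h2]
    field_simp

theorem integrable_dampedPhase (w : Spacetime m) (l : ℝ) {δ : ℝ} (hδ : 0 < δ) :
    Integrable (dampedPhase w l δ) :=
  integrable_gaussian_spacetime (fun i => by
    rw [Complex.re_ofReal_mul, dampedCoeff_re]; positivity) _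

theorem integral_mul_dampedPhase (a : SchwartzMap (Spacetime m) ℂ) (w : Spacetime m) (l : ℝ)
    {δ : ℝ} (hδ : 0 < δ) :
    ∫ z, a z * dampedPhase w l δ z =
      (∏ i, (1 / dampedCoeff m l δ i) ^ (1 / 2 : ℂ)) *
        ∫ ζ, (𝓕⁻ a : SchwartzMap (Spacetime m) ℂ) ζ *
          Complex.exp (∑ i, -(π * ((w - ζ) i : ℂ) ^ 2 / dampedCoeff m l δ i)) := by
  have hinv : 𝓕 ((𝓕⁻ a : SchwartzMap (Spacetime m) ℂ) : Spacetime m → ℂ) = a := by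
    rw [← SchwartzMap.fourier_coe, FourierTransform.fourier_fourierInv_eq]
  have key : ∫ z, 𝓕 ((𝓕⁻ a : SchwartzMap (Spacetime m) ℂ) : Spacetime m → ℂ) z *
      dampedPhase w l δ z = ∫ ζ, (𝓕⁻ a : SchwartzMap (Spacetime m) ℂ) ζ *
        𝓕 (dampedPhase w l δ) ζ := by
    simpa using! VectorFourier.integral_fourierIntegral_smul_eq_flip (L := innerₗ (Spacetime m))
      Real.continuous_fourierChar continuous_inner
      (SchwartzMap.integrable (𝓕⁻ a : SchwartzMap (Spacetime m) ℂ)) (integrable_dampedPhase w l hδ)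
  rw [hinv] at key
  rw [key, ← integral_const_mul]
  congr 1
  ext ζ
  rw [fourier_dampedPhase w l hδ]
  ring

theorem continuous_dampedCoeff (l : ℝ) (i : Fin (m + 1)) :
    Continuous fun δ => dampedCoeff m l δ i := by
  unfold dampedCoeff
  fun_prop

theorem tendsto_prod_dampedCoeff {l : ℝ} (hl : 0 < l) :
    Tendsto (fun δ => ∏ i, (1 / dampedCoeff m l δ i) ^ (1 / 2 : ℂ)) (𝓝[>] 0)
      (𝓝 (∏ i, (1 / dampedCoeff m l 0 i) ^ (1 / 2 : ℂ))) := by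
  refine tendsto_finsetProd _ fun i _ => ?_
  have h1 : ContinuousAt (fun δ => 1 / dampedCoeff m l δ i) 0 :=
    continuousAt_const.div (continuous_dampedCoeff l i).continuousAt (dampedCoeff_ne_zero hl 0 i)
  have h2 : (1 / dampedCoeff m l 0 i) ∈ Complex.slitPlane := by
    refine Complex.mem_slitPlane_iff.2 (Or.inr fun h => ?_)
    rw [one_div, Complex.inv_im, div_eq_zero_iff, neg_eq_zero, Complex.normSq_eq_zero] at h
    have hne := dampedCoeff_ne_zero hl 0 i
    exact hne (Complex.ext (dampedCoeff_re l 0 i) (h.resolve_right hne))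
  exact ((continuousAt_cpow_const h2).tendsto.comp h1.tendsto).mono_left nhdsWithin_le_nhds

theorem prod_dampedCoeff_zero {l : ℝ} (hl : 0 < l) :
    ∏ i, (1 / dampedCoeff m l 0 i) ^ (1 / 2 : ℂ) =
      (∏ i, (Complex.I * signature m i) ^ (1 / 2 : ℂ)) * ((√(2 * l))⁻¹ ^ (m + 1) : ℝ) := by
  have h (i : Fin (m + 1)) : (1 / dampedCoeff m l 0 i) ^ (1 / 2 : ℂ) =
      (Complex.I * signature m i) ^ (1 / 2 : ℂ) * ((√(2 * l))⁻¹ : ℝ) := by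
    have hne : Complex.I * signature m i ≠ 0 := by
      rcases signature_eq_or i with h | h <;> simp [h]
    have hr : 0 < (2 * l)⁻¹ := by positivity
    have h1 : 1 / dampedCoeff m l 0 i = ((2 * l)⁻¹ : ℝ) * (Complex.I * signature m i) := by
      have hlc : (l : ℂ) ≠ 0 := by exact_mod_cast hl.ne'
      have h3 : (signature m i : ℂ) * signature m i = 1 := by
        exact_mod_cast signature_mul_self i
      rw [div_eq_iff (dampedCoeff_ne_zero hl 0 i), dampedCoeff]
      push_cast
      field_simp
      linear_combination 2 * (l : ℂ) * ((signature m i : ℂ) * signature m i * Complex.I_sq - h3)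
    have hrc : (((2 * l)⁻¹ : ℝ) : ℂ) ≠ 0 := by exact_mod_cast hr.ne'
    rw [h1, Complex.cpow_def_of_ne_zero (mul_ne_zero hrc hne), Complex.log_ofReal_mul hr hne,
      add_mul, Complex.exp_add, mul_comm, Complex.cpow_def_of_ne_zero hne]
    congr 1
    rw [← Real.sqrt_inv, Real.sqrt_eq_rpow, Complex.ofReal_cpow hr.le,
      Complex.cpow_def_of_ne_zero hrc, Complex.ofReal_log hr.le]
    push_cast
    rfl
  rw [Finset.prod_congr rfl fun i _ => h i, Finset.prod_mul_distrib]
  simp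

theorem sum_div_dampedCoeff_zero {l : ℝ} (hl : 0 < l) (y : Spacetime m) :
    ∑ i, -(π * (y i : ℂ) ^ 2 / dampedCoeff m l 0 i) =
      (-(π / 2 * waveSymbol y / l) : ℝ) * Complex.I := by
  rw [waveSymbol_eq_sum]
  push_cast
  simp only [Finset.mul_sum, Finset.sum_div, Finset.sum_mul, ← Finset.sum_neg_distrib]
  refine Finset.sum_congr rfl fun i _ => ?_
  have hlc : (l : ℂ) ≠ 0 := by exact_mod_cast hl.ne'
  have h3 : (signature m i : ℂ) * signature m i = 1 := by
    exact_mod_cast signature_mul_self i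
  rw [neg_eq_iff_eq_neg, div_eq_iff (dampedCoeff_ne_zero hl 0 i), dampedCoeff]
  push_cast
  field_simp
  linear_combination 2 * (y i : ℂ) ^ 2 * l *
    ((signature m i : ℂ) * signature m i * Complex.I_sq - h3)

theorem norm_exp_sum_div_dampedCoeff_le (y : Spacetime m) (l : ℝ) {δ : ℝ} (hδ : 0 ≤ δ) :
    ‖Complex.exp (∑ i, -(π * (y i : ℂ) ^ 2 / dampedCoeff m l δ i))‖ ≤ 1 := by
  rw [Complex.norm_exp, Real.exp_le_one_iff, Complex.re_sum]
  refine Finset.sum_nonpos fun i _ => ?_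
  have : (π * (y i : ℂ) ^ 2 / dampedCoeff m l δ i) =
      ((π * y i ^ 2 : ℝ) : ℂ) * (dampedCoeff m l δ i)⁻¹ := by
    push_cast; rfl
  rw [this, Complex.neg_re, Complex.re_ofReal_mul, Complex.inv_re, dampedCoeff_re, neg_nonpos]
  have := Complex.normSq_nonneg (dampedCoeff m l δ i)
  positivity

/-- The stationary phase identity for the quadratic phase, with no error term. -/
theorem oscIntegral_eq (a : SchwartzMap (Spacetime m) ℂ) (w : Spacetime m) {l : ℝ} (hl : 0 < l) :
    oscIntegral a w l =
      (∏ i, (Complex.I * signature m i) ^ (1 / 2 : ℂ)) * ((√(2 * l))⁻¹ ^ (m + 1) : ℝ) *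
        ∫ ζ, (𝓕⁻ a : SchwartzMap (Spacetime m) ℂ) ζ *
          Complex.exp ((-(π / 2 * waveSymbol (w - ζ) / l) : ℝ) * Complex.I) := by
  have hw : Continuous (waveSymbol : Spacetime m → ℝ) := contDiff_waveSymbol.continuous
  have t1 : Tendsto (fun δ => ∫ z, a z * dampedPhase w l δ z) (𝓝[>] 0)
      (𝓝 (oscIntegral a w l)) := by
    simp_rw [dampedPhase_eq]
    refine tendsto_integral_filter_of_dominated_convergence (fun z => ‖a z‖) ?_ ?_
      a.integrable.norm ?_
    · have := a.continuous
      exact Eventually.of_forall fun δ => by fun_prop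
    · filter_upwards [self_mem_nhdsWithin] with δ (hδ : 0 < δ)
      refine Eventually.of_forall fun z => ?_
      rw [norm_mul, norm_mul, Complex.norm_exp_ofReal_mul_I, mul_one, Complex.norm_real,
        norm_of_nonneg (Real.exp_pos _).le]
      refine mul_le_of_le_one_right (norm_nonneg _) ?_
      rw [Real.exp_le_one_iff, neg_nonpos]
      positivity
    · refine Eventually.of_forall fun z => ?_
      have : Continuous fun δ : ℝ => a z * ((Real.exp (-(π * δ * ‖z‖ ^ 2)) : ℝ) *
        Complex.exp ((2 * π * (⟪z, w⟫ + l * waveSymbol z) : ℝ) * Complex.I)) := by fun_prop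
      have := this.tendsto 0
      simp only [mul_zero, zero_mul, neg_zero, Real.exp_zero, Complex.ofReal_one, one_mul] at this
      exact this.mono_left nhdsWithin_le_nhds
  have t2 : Tendsto (fun δ => ∫ ζ, (𝓕⁻ a : SchwartzMap (Spacetime m) ℂ) ζ *
          Complex.exp (∑ i, -(π * ((w - ζ) i : ℂ) ^ 2 / dampedCoeff m l δ i))) (𝓝[>] 0)
      (𝓝 (∫ ζ, (𝓕⁻ a : SchwartzMap (Spacetime m) ℂ) ζ *
          Complex.exp (∑ i, -(π * ((w - ζ) i : ℂ) ^ 2 / dampedCoeff m l 0 i)))) := by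
    refine tendsto_integral_filter_of_dominated_convergence
      (fun z => ‖(𝓕⁻ a : SchwartzMap (Spacetime m) ℂ) z‖) ?_ ?_
      (SchwartzMap.integrable _).norm ?_
    · have := (𝓕⁻ a : SchwartzMap (Spacetime m) ℂ).continuous
      exact Eventually.of_forall fun δ => by
        refine Continuous.aestronglyMeasurable
          (this.mul (Continuous.cexp (continuous_finsetSum _ fun i _ => ?_)))
        fun_prop
    · filter_upwards [self_mem_nhdsWithin] with δ (hδ : 0 < δ)
      refine Eventually.of_forall fun z => ?_
      rw [norm_mul]
      exact mul_le_of_le_one_right (norm_nonneg _) (norm_exp_sum_div_dampedCoeff_le _ _ hδ.le)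
    · refine Eventually.of_forall fun ζ => ?_
      have : ContinuousAt (fun δ : ℝ => (𝓕⁻ a : SchwartzMap (Spacetime m) ℂ) ζ *
          Complex.exp (∑ i, -(π * ((w - ζ) i : ℂ) ^ 2 / dampedCoeff m l δ i))) 0 := by
        refine continuousAt_const.mul (ContinuousAt.cexp (tendsto_finsetSum _ fun i _ => ?_))
        exact (continuousAt_const.div (continuous_dampedCoeff l i).continuousAt
          (dampedCoeff_ne_zero hl 0 i)).neg
      exact this.tendsto.mono_left nhdsWithin_le_nhds
  have t3 := (tendsto_prod_dampedCoeff (m := m) hl).mul t2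
  simp_rw [sum_div_dampedCoeff_zero hl, prod_dampedCoeff_zero hl] at t3
  refine tendsto_nhds_unique (t1.congr' ?_) t3
  filter_upwards [self_mem_nhdsWithin] with δ (hδ : 0 < δ)
  exact integral_mul_dampedPhase a w l hδ

end Gaussian

section VanDerCorput

theorem abs_div_add_sq_le {μ : ℝ} (hμ : 0 < μ) (p : ℝ) : |p / (μ + p ^ 2)| ≤ 1 / (2 * √μ) := by
  have h1 : 0 < √μ := Real.sqrt_pos.2 hμ
  have h2 : √μ ^ 2 = μ := Real.sq_sqrt hμ.le
  have h3 : 0 < μ + p ^ 2 := by positivity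
  rw [abs_div, abs_of_pos h3, div_le_div_iff₀ h3 (by positivity)]
  nlinarith [sq_nonneg (√μ - |p|), sq_abs p]

/-- The second derivative test of van der Corput. -/
theorem norm_integral_le_of_le_second_deriv {a b μ M M' : ℝ} (hab : a ≤ b) (hμ : 0 < μ)
    {φ p q ψ ψ' : ℝ → ℝ} (hφ : ∀ x ∈ Set.Icc a b, HasDerivAt φ (p x) x)
    (hp : ∀ x ∈ Set.Icc a b, HasDerivAt p (q x) x) (hq : ContinuousOn q (Set.Icc a b))
    (hqμ : ∀ x ∈ Set.Icc a b, μ ≤ q x) (hψ : ∀ x ∈ Set.Icc a b, HasDerivAt ψ (ψ' x) x)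
    (hψ' : ContinuousOn ψ' (Set.Icc a b)) (hM : ∀ x ∈ Set.Icc a b, |ψ x| ≤ M)
    (hM' : ∀ x ∈ Set.Icc a b, |ψ' x| ≤ M') :
    ‖∫ x in a..b, (ψ x : ℂ) * Complex.exp ((-φ x : ℝ) * Complex.I)‖ ≤
      (M * (2 * π + 1) + M' * (b - a)) / √μ := by
  have hsq : 0 < √μ := Real.sqrt_pos.2 hμ
  have hden (x : ℝ) : 0 < μ + p x ^ 2 := by positivity
  have hM0 : 0 ≤ M := (abs_nonneg _).trans (hM a ⟨le_rfl, hab⟩)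
  have hM'0 : 0 ≤ M' := (abs_nonneg _).trans (hM' a ⟨le_rfl, hab⟩)
  set e : ℝ → ℂ := fun x => Complex.exp ((-φ x : ℝ) * Complex.I) with he
  have hen (x : ℝ) : ‖e x‖ = 1 := Complex.norm_exp_ofReal_mul_I _
  set u : ℝ → ℝ := fun x => ψ x * (p x / (μ + p x ^ 2)) with hu
  set u' : ℝ → ℝ := fun x => ψ' x * (p x / (μ + p x ^ 2)) +
    ψ x * (q x * (μ - p x ^ 2) / (μ + p x ^ 2) ^ 2) with hu'
  have hφc : ContinuousOn φ (Set.Icc a b) := fun x hx => (hφ x hx).continuousAt.continuousWithinAt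
  have hpc : ContinuousOn p (Set.Icc a b) := fun x hx => (hp x hx).continuousAt.continuousWithinAt
  have hψc : ContinuousOn ψ (Set.Icc a b) := fun x hx => (hψ x hx).continuousAt.continuousWithinAt
  have hdc : ContinuousOn (fun x => μ + p x ^ 2) (Set.Icc a b) :=
    continuousOn_const.add (hpc.pow 2)
  have hec : ContinuousOn e (Set.Icc a b) :=
    ((Complex.continuous_ofReal.comp_continuousOn hφc.neg).mul continuousOn_const).cexp
  have hu'c : ContinuousOn u' (Set.Icc a b) :=
    (hψ'.mul (hpc.div hdc fun x _ => (hden x).ne')).add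
      (hψc.mul ((hq.mul (continuousOn_const.sub (hpc.pow 2))).div (hdc.pow 2)
        fun x _ => (pow_pos (hden x) 2).ne'))
  have hud : ∀ x ∈ Set.Icc a b, HasDerivAt u (u' x) x := by
    intro x hx
    have h1 : HasDerivAt (fun x => μ + p x ^ 2) (2 * p x * q x) x := by
      simpa using ((hp x hx).pow 2).const_add μ
    refine ((hψ x hx).mul ((hp x hx).div h1 (hden x).ne')).congr_deriv ?_
    simp only [hu']
    congr 3
    ring
  have hed : ∀ x ∈ Set.Icc a b, HasDerivAt e (-(p x : ℂ) * Complex.I * e x) x := by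
    intro x hx
    have h1 := ((hφ x hx).neg.ofReal_comp.mul_const Complex.I).cexp
    refine h1.congr_deriv ?_
    simp only [he, Pi.neg_apply]
    push_cast
    ring
  have hUd : ∀ x ∈ Set.Icc a b, HasDerivAt (fun x => Complex.I * ((u x : ℂ) * e x))
      (Complex.I * u' x * e x + u x * p x * e x) x := by
    intro x hx
    refine (((hud x hx).ofReal_comp.mul (hed x hx)).const_mul Complex.I).congr_deriv ?_
    linear_combination -(u x * p x * e x : ℂ) * Complex.I_sq
  have hpcC := Complex.continuous_ofReal.comp_continuousOn hpc
  have hucC : ContinuousOn (fun x => (u x : ℂ)) (Set.Icc a b) :=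
    Complex.continuous_ofReal.comp_continuousOn
      fun x hx => (hud x hx).continuousAt.continuousWithinAt
  have hu'cC := Complex.continuous_ofReal.comp_continuousOn hu'c
  have hψcC := Complex.continuous_ofReal.comp_continuousOn hψc
  have hUc : ContinuousOn (fun x => Complex.I * u' x * e x + u x * p x * e x) (Set.Icc a b) :=
    ((continuousOn_const.mul hu'cC).mul hec).add ((hucC.mul hpcC).mul hec)
  have ftc : ∫ x in a..b, (Complex.I * u' x * e x + u x * p x * e x) =
      Complex.I * (u b * e b) - Complex.I * (u a * e a) :=
    intervalIntegral.integral_eq_sub_of_hasDerivAt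
      (fun x hx => hUd x (by rwa [Set.uIcc_of_le hab] at hx))
      (ContinuousOn.intervalIntegrable (by rwa [Set.uIcc_of_le hab]))
  set R : ℝ → ℂ := fun x => ψ x * e x - (Complex.I * u' x * e x + u x * p x * e x) with hR
  have hRc : ContinuousOn R (Set.Icc a b) := (hψcC.mul hec).sub hUc
  have hsplit : ∫ x in a..b, (ψ x : ℂ) * e x =
      (Complex.I * (u b * e b) - Complex.I * (u a * e a)) + ∫ x in a..b, R x := by
    rw [← ftc, ← intervalIntegral.integral_add]
    · congr 1; ext x; simp only [hR]; ring
    · exact ContinuousOn.intervalIntegrable (by rwa [Set.uIcc_of_le hab])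
    · exact ContinuousOn.intervalIntegrable (by rwa [Set.uIcc_of_le hab])
  have hbd : ∀ x ∈ Set.Icc a b, ‖Complex.I * (u x * e x)‖ ≤ M * (1 / (2 * √μ)) := by
    intro x hx
    rw [norm_mul, norm_mul, hen, Complex.norm_I, Complex.norm_real, one_mul, mul_one,
      Real.norm_eq_abs, abs_mul]
    exact mul_le_mul (hM x hx) (abs_div_add_sq_le hμ _) (abs_nonneg _) hM0
  set W' : ℝ → ℝ := fun x => 2 * M * (q x / (μ + p x ^ 2)) + M' / (2 * √μ) with hW'
  have hW'c : ContinuousOn W' (Set.Icc a b) :=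
    (continuousOn_const.mul (hq.div hdc fun x _ => (hden x).ne')).add continuousOn_const
  have hRW : ∀ x ∈ Set.Icc a b, ‖R x‖ ≤ W' x := by
    intro x hx
    have hd := hden x
    have hqx := hqμ x hx
    have hq0 : 0 ≤ q x := hμ.le.trans hqx
    have e1 : R x = ((ψ x * (μ / (μ + p x ^ 2)) : ℝ) : ℂ) * e x - Complex.I * u' x * e x := by
      have : ψ x * (μ / (μ + p x ^ 2)) = ψ x - u x * p x := by
        simp only [hu]; field_simp; ring
      rw [this]
      simp only [hR]
      push_cast
      ring
    have n1 : ‖((ψ x * (μ / (μ + p x ^ 2)) : ℝ) : ℂ) * e x‖ ≤ M * (q x / (μ + p x ^ 2)) := by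
      rw [norm_mul, hen, mul_one, Complex.norm_real, Real.norm_eq_abs, abs_mul,
        abs_of_pos (div_pos hμ hd)]
      have := hM x hx
      gcongr
    have n2 : ‖Complex.I * u' x * e x‖ ≤ M' * (1 / (2 * √μ)) + M * (q x / (μ + p x ^ 2)) := by
      rw [norm_mul, hen, mul_one, norm_mul, Complex.norm_I, one_mul, Complex.norm_real,
        Real.norm_eq_abs]
      refine (abs_add_le _ _).trans (add_le_add ?_ ?_)
      · rw [abs_mul]
        exact mul_le_mul (hM' x hx) (abs_div_add_sq_le hμ _) (abs_nonneg _) hM'0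
      · rw [abs_mul]
        refine mul_le_mul (hM x hx) ?_ (abs_nonneg _) hM0
        rw [abs_div, abs_mul, abs_of_nonneg hq0, abs_of_pos (pow_pos hd 2),
          div_le_div_iff₀ (pow_pos hd 2) hd, mul_assoc]
        refine mul_le_mul_of_nonneg_left ?_ hq0
        rw [sq (μ + p x ^ 2)]
        refine mul_le_mul_of_nonneg_right ?_ hd.le
        rw [abs_le]
        constructor <;> nlinarith [sq_nonneg (p x)]
    rw [e1]
    refine (norm_sub_le _ _).trans ((add_le_add n1 n2).trans (le_of_eq ?_))
    simp only [hW']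
    ring
  have hWd : ∀ x ∈ Set.Icc a b, HasDerivAt
      (fun x => 2 * M * (Real.arctan (p x / √μ) / √μ) + M' / (2 * √μ) * x) (W' x) x := by
    intro x hx
    have h1 := (((hp x hx).div_const √μ).arctan.div_const √μ).const_mul (2 * M)
    refine (h1.add ((hasDerivAt_id x).const_mul (M' / (2 * √μ)))).congr_deriv ?_
    have h2 : √μ ^ 2 = μ := Real.sq_sqrt hμ.le
    have h3 := hden x
    simp only [hW', mul_one, add_left_inj, div_pow, h2]
    congr 1
    have h4 : 1 + p x ^ 2 / μ = (μ + p x ^ 2) / μ := by field_simp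
    rw [h4]
    field_simp
    rw [h2]
    ring
  have hWi : ∫ x in a..b, W' x =
      (2 * M * (Real.arctan (p b / √μ) / √μ) + M' / (2 * √μ) * b) -
      (2 * M * (Real.arctan (p a / √μ) / √μ) + M' / (2 * √μ) * a) :=
    intervalIntegral.integral_eq_sub_of_hasDerivAt
      (fun x hx => hWd x (by rwa [Set.uIcc_of_le hab] at hx))
      (ContinuousOn.intervalIntegrable (by rwa [Set.uIcc_of_le hab]))
  have hRn : ‖∫ x in a..b, R x‖ ≤ ∫ x in a..b, W' x :=
    intervalIntegral.norm_integral_le_of_norm_le hab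
      (Eventually.of_forall fun x hx => hRW x (Set.Ioc_subset_Icc_self hx))
      (ContinuousOn.intervalIntegrable (by rwa [Set.uIcc_of_le hab]))
  have hat : Real.arctan (p b / √μ) - Real.arctan (p a / √μ) ≤ π := by
    linarith [Real.arctan_lt_pi_div_two (p b / √μ), Real.neg_pi_div_two_lt_arctan (p a / √μ)]
  rw [hsplit]
  have hb1 := hbd b ⟨hab, le_rfl⟩
  have ha1 := hbd a ⟨le_rfl, hab⟩
  refine (norm_add_le _ _).trans ((add_le_add ((norm_sub_le _ _).trans (add_le_add hb1 ha1))
    (hRn.trans (le_of_eq hWi))).trans ?_)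
  have hfin : (M * (1 / (2 * √μ)) + M * (1 / (2 * √μ)) +
      (2 * M * (Real.arctan (p b / √μ) / √μ) + M' / (2 * √μ) * b -
      (2 * M * (Real.arctan (p a / √μ) / √μ) + M' / (2 * √μ) * a))) =
      (M + 2 * M * (Real.arctan (p b / √μ) - Real.arctan (p a / √μ)) + M' / 2 * (b - a)) / √μ := by
    field_simp
    ring
  rw [hfin]
  refine div_le_div_of_nonneg_right ?_ hsq.le
  have h5 := mul_le_mul_of_nonneg_left hat (by positivity : 0 ≤ 2 * M)
  have h6 : 0 ≤ M' * (b - a) := mul_nonneg hM'0 (sub_nonneg.2 hab)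
  linarith

end VanDerCorput

section Stationary

variable {m : ℕ}

/-- The kernel obtained by integrating the Fresnel factor over the stationary range of
frequencies. -/
def fresnelKernel (α r s b : ℝ) : ℂ :=
  ∫ x in (r / 5)..(4 * r),
    ((x ^ α : ℝ) : ℂ) * Complex.exp ((-(2 * π * s * x + π / 2 * b / x) : ℝ) * Complex.I)

theorem norm_fresnelKernel_le {α r : ℝ} (hα : α ≤ 0) (hr : 0 < r) (s b : ℝ) :
    ‖fresnelKernel α r s b‖ ≤ (r / 5) ^ α * (4 * r) := by
  have hab : r / 5 ≤ 4 * r := by linarith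
  have h := intervalIntegral.norm_integral_le_of_norm_le_const (a := r / 5) (b := 4 * r)
    (f := fun x => ((x ^ α : ℝ) : ℂ) *
      Complex.exp ((-(2 * π * s * x + π / 2 * b / x) : ℝ) * Complex.I))
    (C := (r / 5) ^ α) (by
      intro x hx
      rw [Set.uIoc_of_le hab] at hx
      have hx0 : 0 < x := lt_trans (by positivity) hx.1
      rw [norm_mul, Complex.norm_exp_ofReal_mul_I, mul_one, Complex.norm_real,
        Real.norm_of_nonneg (Real.rpow_nonneg hx0.le _)]
      exact Real.rpow_le_rpow_of_nonpos (by positivity) hx.1.le hα)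
  refine h.trans (mul_le_mul_of_nonneg_left ?_ (by positivity))
  rw [abs_of_nonneg (by linarith)]
  linarith

theorem norm_fresnelKernel_le_sqrt {α r : ℝ} (hα : α ≤ 0) (hr : 0 < r) (s : ℝ) {b : ℝ}
    (hb : 7 / 36 * r ^ 2 ≤ b) :
    ‖fresnelKernel α r s b‖ ≤ 12 * (2 * π + 1 - 19 * α) * ((r / 5) ^ α * √r) := by
  have hab : r / 5 ≤ 4 * r := by linarith
  have hpos : ∀ x ∈ Set.Icc (r / 5) (4 * r), 0 < x := fun x hx =>
    lt_of_lt_of_le (by positivity) hx.1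
  have hb0 : 0 < b := lt_of_lt_of_le (by positivity) hb
  have h := norm_integral_le_of_le_second_deriv (μ := 1 / (144 * r)) hab (by positivity)
    (φ := fun x => 2 * π * s * x + π / 2 * b / x) (p := fun x => 2 * π * s - π / 2 * b / x ^ 2)
    (q := fun x => π * b / x ^ 3) (ψ := fun x => x ^ α) (ψ' := fun x => α * x ^ (α - 1))
    (M := (r / 5) ^ α) (M' := -α * (r / 5) ^ (α - 1)) ?_ ?_ ?_ ?_ ?_ ?_ ?_ ?_
  · refine h.trans (le_of_eq ?_)
    rw [Real.rpow_sub_one (by positivity), Real.sqrt_div zero_le_one,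
      Real.sqrt_mul (by norm_num), Real.sqrt_one,
      show (144 : ℝ) = 12 ^ 2 by norm_num, Real.sqrt_sq (by norm_num)]
    field_simp
    ring
  · intro x hx
    have hx0 := hpos x hx
    refine (((hasDerivAt_id x).const_mul (2 * π * s)).add
      ((hasDerivAt_inv hx0.ne').const_mul (π / 2 * b))).congr_deriv ?_
    field_simp
    ring
  · intro x hx
    have hx0 := hpos x hx
    have h1 := (((hasDerivAt_pow 2 x).inv (pow_pos hx0 2).ne').const_mul (π / 2 * b)).const_sub
      (2 * π * s)
    refine h1.congr_deriv ?_
    field_simp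
    norm_num
  · exact continuousOn_const.div (continuousOn_pow 3) fun x hx => (pow_pos (hpos x hx) 3).ne'
  · intro x hx
    have hx0 := hpos x hx
    rw [div_le_div_iff₀ (by positivity) (by positivity)]
    have h1 : x ^ 3 ≤ (4 * r) ^ 3 := pow_le_pow_left₀ hx0.le hx.2 3
    have h2 : 3 * (7 / 36 * r ^ 2) ≤ π * b :=
      mul_le_mul Real.pi_gt_three.le hb (by positivity) Real.pi_pos.le
    have h3 := mul_le_mul_of_nonneg_right h2 (by positivity : 0 ≤ 144 * r)
    rw [one_mul]
    nlinarith [pow_pos hr 3]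
  · intro x hx
    exact Real.hasDerivAt_rpow_const (Or.inl (hpos x hx).ne')
  · exact continuousOn_const.mul
      (continuousOn_id.rpow_const fun x hx => Or.inl (hpos x hx).ne')
  · intro x hx
    rw [abs_of_nonneg (Real.rpow_nonneg (hpos x hx).le _)]
    exact Real.rpow_le_rpow_of_nonpos (by positivity) hx.1 hα
  · intro x hx
    rw [abs_mul, abs_of_nonpos hα, abs_of_nonneg (Real.rpow_nonneg (hpos x hx).le _)]
    exact mul_le_mul_of_nonneg_left
      (Real.rpow_le_rpow_of_nonpos (by positivity) hx.1 (by linarith)) (by linarith)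

/-- The part of the frequency integral where the phase may be stationary. -/
def stationaryPart (a : Spacetime m → ℂ) (w : Spacetime m) (s : ℝ) : ℂ :=
  ∫ l in (‖w‖ / 5)..(4 * ‖w‖), ((l ^ 2 : ℝ) : ℂ) * oscIntegral a w l * levelPhase l (-s)

theorem sq_mul_inv_sqrt_pow {l : ℝ} (hl : 0 < l) (k : ℕ) :
    l ^ 2 * (√(2 * l))⁻¹ ^ k = (√2)⁻¹ ^ k * l ^ (2 - (k : ℝ) / 2) := by
  have h : (√l)⁻¹ ^ k = l ^ (-((k : ℝ) / 2)) := by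
    rw [Real.sqrt_eq_rpow, ← Real.rpow_neg hl.le, ← Real.rpow_natCast, ← Real.rpow_mul hl.le]
    congr 1
    ring
  rw [Real.sqrt_mul zero_le_two, mul_inv, mul_pow, h, sub_eq_add_neg, Real.rpow_add hl,
    Real.rpow_two]
  ring

/-- The constant prefactor in the Fresnel representation. -/
def fresnelConst (m : ℕ) : ℂ :=
  (∏ i, (Complex.I * signature m i) ^ (1 / 2 : ℂ)) * ((√2)⁻¹ ^ (m + 1) : ℝ)

/-- The stationary part as an average of Fresnel kernels. -/
theorem stationaryPart_eq (a : SchwartzMap (Spacetime m) ℂ) {w : Spacetime m} (hw : 0 < ‖w‖)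
    (s : ℝ) : stationaryPart a w s = fresnelConst m *
      ∫ ζ, (𝓕⁻ a : SchwartzMap (Spacetime m) ℂ) ζ *
        fresnelKernel (2 - ((m + 1 : ℕ) : ℝ) / 2) ‖w‖ s (waveSymbol (w - ζ)) := by
  set α : ℝ := 2 - ((m + 1 : ℕ) : ℝ) / 2 with hα
  set A : SchwartzMap (Spacetime m) ℂ := 𝓕⁻ a with hA
  have hab : ‖w‖ / 5 ≤ 4 * ‖w‖ := by linarith
  set J : ℝ → Spacetime m → ℂ := fun l ζ => A ζ * (((l ^ α : ℝ) : ℂ) *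
    Complex.exp ((-(2 * π * s * l + π / 2 * waveSymbol (w - ζ) / l) : ℝ) * Complex.I)) with hJ
  have h1 : stationaryPart a w s =
      ∫ l in (‖w‖ / 5)..(4 * ‖w‖), fresnelConst m * ∫ ζ, J l ζ := by
    refine intervalIntegral.integral_congr_ae (Eventually.of_forall fun l hl => ?_)
    rw [Set.uIoc_of_le hab] at hl
    have hl0 : 0 < l := lt_trans (by positivity) hl.1
    rw [oscIntegral_eq a w hl0, fresnelConst]
    have e : ∀ ζ, J l ζ = ((l ^ α : ℝ) : ℂ) * levelPhase l (-s) * (A ζ *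
        Complex.exp ((-(π / 2 * waveSymbol (w - ζ) / l) : ℝ) * Complex.I)) := by
      intro ζ
      simp only [hJ, levelPhase]
      have : Complex.exp ((-(2 * π * s * l + π / 2 * waveSymbol (w - ζ) / l) : ℝ) * Complex.I) =
          Complex.exp ((2 * π * l * -s : ℝ) * Complex.I) *
          Complex.exp ((-(π / 2 * waveSymbol (w - ζ) / l) : ℝ) * Complex.I) := by
        rw [← Complex.exp_add]
        congr 1
        push_cast
        ring
      rw [this]
      ring
    simp only [e]
    rw [integral_const_mul]
    have h2 := congrArg (fun x : ℝ => (x : ℂ)) (sq_mul_inv_sqrt_pow hl0 (m + 1))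
    simp only [Complex.ofReal_mul] at h2
    linear_combination (∏ i, (Complex.I * signature m i) ^ (1 / 2 : ℂ)) * levelPhase l (-s) *
      (∫ ζ, A ζ * Complex.exp ((-(π / 2 * waveSymbol (w - ζ) / l) : ℝ) * Complex.I)) * h2
  rw [h1, intervalIntegral.integral_const_mul]
  congr 1
  rw [intervalIntegral.integral_of_le hab, integral_integral_swap]
  · refine integral_congr_ae (Eventually.of_forall fun ζ => ?_)
    simp only [hJ, fresnelKernel]
    rw [intervalIntegral.integral_of_le hab, integral_const_mul]
  · have hl : IntegrableOn (fun l : ℝ => ((l ^ α : ℝ) : ℂ)) (Set.Ioc (‖w‖ / 5) (4 * ‖w‖)) := by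
      refine IntegrableOn.mono_set (ContinuousOn.integrableOn_Icc ?_) Set.Ioc_subset_Icc_self
      exact Complex.continuous_ofReal.comp_continuousOn (continuousOn_id.rpow_const fun x hx =>
        Or.inl (lt_of_lt_of_le (by positivity) hx.1).ne')
    have h3 : Integrable (fun q : ℝ × Spacetime m => ((q.1 ^ α : ℝ) : ℂ) * A q.2)
        ((volume.restrict (Set.Ioc (‖w‖ / 5) (4 * ‖w‖))).prod volume) :=
      Integrable.mul_prod hl A.integrable
    have hg : Measurable (waveSymbol : Spacetime m → ℝ) := measurable_waveSymbol
    have h4 : Measurable fun q : ℝ × Spacetime m => Complex.exp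
        ((-(2 * π * s * q.1 + π / 2 * waveSymbol (w - q.2) / q.1) : ℝ) * Complex.I) := by
      fun_prop
    refine (h3.bdd_mul (c := 1) h4.aestronglyMeasurable (Eventually.of_forall fun q =>
      (Complex.norm_exp_ofReal_mul_I _).le)).congr (Eventually.of_forall fun q => ?_)
    simp only [hJ, Function.uncurry]
    ring

theorem abs_timeCoord_le (z : Spacetime m) : |timeCoord z| ≤ ‖z‖ :=
  PiLp.norm_apply_le z (Fin.last m)

theorem le_waveSymbol_sub {w ζ : Spacetime m} (ht : |timeCoord w| ≤ ‖w‖ / 3)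
    (hζ : ‖ζ‖ ≤ ‖w‖ / 6) : 7 / 36 * ‖w‖ ^ 2 ≤ waveSymbol (w - ζ) := by
  have h1 : ‖w‖ * (5 / 6) ≤ ‖w - ζ‖ := by linarith [norm_sub_norm_le w ζ]
  have h2 : |timeCoord (w - ζ)| ≤ ‖w‖ / 2 := by
    have h : timeCoord (w - ζ) = timeCoord w - timeCoord ζ := rfl
    rw [h]
    linarith [abs_sub (timeCoord w) (timeCoord ζ), abs_timeCoord_le ζ]
  have h3 := pow_le_pow_left₀ (by positivity) h1 2
  have h4 := pow_le_pow_left₀ (abs_nonneg _) h2 2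
  rw [sq_abs] at h4
  rw [waveSymbol]
  nlinarith

/-- Bounds for the stationary part; far from the light cone the van der Corput test gains a factor
`‖w‖ ^ (-1 / 2)`. -/
theorem exists_norm_stationaryPart_le (hm : 3 ≤ m) (a : SchwartzMap (Spacetime m) ℂ) :
    ∃ C, 0 ≤ C ∧ ∀ (w : Spacetime m) (s : ℝ), 1 ≤ ‖w‖ →
      ‖stationaryPart a w s‖ ≤ C * ‖w‖ ^ (2 - ((m + 1 : ℕ) : ℝ) / 2 + 1) ∧
      (|timeCoord w| ≤ ‖w‖ / 3 →
        ‖stationaryPart a w s‖ ≤ C * ‖w‖ ^ (2 - ((m + 1 : ℕ) : ℝ) / 2 + 1 / 2)) := by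
  set α : ℝ := 2 - ((m + 1 : ℕ) : ℝ) / 2 with hα
  have hα0 : α ≤ 0 := by
    have : (3 : ℝ) ≤ m := by exact_mod_cast hm
    rw [hα]
    push_cast
    linarith
  set A : SchwartzMap (Spacetime m) ℂ := 𝓕⁻ a with hA
  set L : ℝ := 12 * (2 * π + 1 - 19 * α) with hL
  have hL0 : 0 ≤ L := by
    have := Real.pi_pos
    rw [hL]
    nlinarith
  have hAi : Integrable fun ζ => ‖A ζ‖ := A.integrable.norm
  have hAi1 : Integrable fun ζ => ‖ζ‖ * ‖A ζ‖ := by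
    simpa using A.integrable_pow_mul volume 1
  have hint : ∀ c d : ℝ, Integrable fun ζ => ‖A ζ‖ * (c + d * ‖ζ‖) := fun c d =>
    ((hAi.const_mul c).add (hAi1.const_mul d)).congr (Eventually.of_forall fun ζ => by
      simp only [Pi.add_apply]; ring)
  set I : ℝ := ∫ ζ, ‖A ζ‖ * ((4 + L) + 24 * ‖ζ‖) with hI
  have hI0 : 0 ≤ I := integral_nonneg fun ζ => by positivity
  have key : ∀ (w : Spacetime m) (s : ℝ) (ρ : ℝ), 1 ≤ ‖w‖ → 0 ≤ ρ →
      (∀ ζ, ‖fresnelKernel α ‖w‖ s (waveSymbol (w - ζ))‖ ≤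
        (‖w‖ / 5) ^ α * ρ * ((4 + L) + 24 * ‖ζ‖)) →
      ‖stationaryPart a w s‖ ≤ ‖fresnelConst m‖ * ((1 / 5) ^ α * I) * (‖w‖ ^ α * ρ) := by
    intro w s ρ hw hρ h
    rw [stationaryPart_eq a (by linarith) s, norm_mul, mul_assoc]
    refine mul_le_mul_of_nonneg_left ?_ (norm_nonneg _)
    have h1 : ∀ ζ, ‖A ζ * fresnelKernel α ‖w‖ s (waveSymbol (w - ζ))‖ ≤
        (‖w‖ / 5) ^ α * ρ * (‖A ζ‖ * ((4 + L) + 24 * ‖ζ‖)) := fun ζ => by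
      rw [norm_mul]
      refine (mul_le_mul_of_nonneg_left (h ζ) (norm_nonneg _)).trans (le_of_eq ?_)
      ring
    refine (norm_integral_le_of_norm_le ((hint _ _).const_mul _)
      (Eventually.of_forall h1)).trans (le_of_eq ?_)
    rw [integral_const_mul, ← hI, div_eq_mul_one_div, Real.mul_rpow (norm_nonneg _) (by norm_num)]
    ring
  refine ⟨‖fresnelConst m‖ * ((1 / 5) ^ α * I), by positivity, fun w s hw => ?_⟩
  have hw0 : 0 < ‖w‖ := by linarith
  have hα5 : 0 ≤ (‖w‖ / 5) ^ α := by positivity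
  rw [Real.rpow_add hw0, Real.rpow_add hw0, Real.rpow_one, ← Real.sqrt_eq_rpow]
  refine ⟨key w s ‖w‖ hw hw0.le fun ζ => ?_, fun ht => key w s √‖w‖ hw (by positivity) fun ζ => ?_⟩
  · refine (norm_fresnelKernel_le hα0 hw0 _ _).trans ?_
    rw [mul_assoc]
    refine mul_le_mul_of_nonneg_left ?_ hα5
    nlinarith [mul_nonneg hw0.le hL0, mul_nonneg hw0.le (norm_nonneg ζ)]
  · have hs0 : 1 ≤ √‖w‖ := Real.one_le_sqrt.2 hw
    rcases le_total ‖ζ‖ (‖w‖ / 6) with hζ | hζ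
    · refine (norm_fresnelKernel_le_sqrt hα0 hw0 s (le_waveSymbol_sub ht hζ)).trans ?_
      rw [← hL, mul_comm L]
      refine mul_le_mul_of_nonneg_left ?_ (by positivity)
      linarith [norm_nonneg ζ]
    · refine (norm_fresnelKernel_le hα0 hw0 _ _).trans ?_
      rw [mul_assoc]
      refine mul_le_mul_of_nonneg_left ?_ hα5
      nlinarith [norm_nonneg ζ]

end Stationary

section Assembly

variable {m : ℕ}

/-- Powers of comparable numbers are comparable. -/
theorem rpow_le_three_rpow_abs_mul {x y : ℝ} (hx : 0 < x) (hy : 0 < y) (hxy : x ≤ 3 * y)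
    (hyx : y ≤ 3 * x) (β : ℝ) : x ^ β ≤ 3 ^ |β| * y ^ β := by
  rw [← div_le_iff₀ (by positivity), ← Real.div_rpow hx.le hy.le]
  have h1 : x / y ≤ 3 := by rwa [div_le_iff₀ hy]
  have h2 : 1 / 3 ≤ x / y := by
    rw [div_le_div_iff₀ (by norm_num) hy]
    linarith
  rcases le_total 0 β with h | h
  · rw [abs_of_nonneg h]
    exact Real.rpow_le_rpow (by positivity) h1 h
  · rw [abs_of_nonpos h]
    refine (Real.rpow_le_rpow_of_nonpos (by norm_num) h2 h).trans (le_of_eq ?_)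
    rw [one_div, Real.inv_rpow (by norm_num), Real.rpow_neg (by norm_num)]

theorem norm_stationaryPart_le_integral (a : Spacetime m → ℂ) (w : Spacetime m) (s : ℝ) :
    ‖stationaryPart a w s‖ ≤ 64 * (∫ z, ‖a z‖) * ‖w‖ ^ 3 := by
  have hab : ‖w‖ / 5 ≤ 4 * ‖w‖ := by linarith [norm_nonneg w]
  have h := intervalIntegral.norm_integral_le_of_norm_le_const (a := ‖w‖ / 5) (b := 4 * ‖w‖)
    (f := fun l => ((l ^ 2 : ℝ) : ℂ) * oscIntegral a w l * levelPhase l (-s))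
    (C := (4 * ‖w‖) ^ 2 * ∫ z, ‖a z‖) (by
      intro l hl
      rw [Set.uIoc_of_le hab] at hl
      have hl0 : 0 ≤ l := le_trans (by positivity) hl.1.le
      rw [norm_mul, norm_levelPhase, mul_one, norm_mul, Complex.norm_real,
        Real.norm_of_nonneg (by positivity)]
      exact mul_le_mul (pow_le_pow_left₀ hl0 hl.2 2) (norm_oscIntegral_le a w l) (norm_nonneg _)
        (by positivity))
  refine h.trans ?_
  rw [abs_of_nonneg (by linarith)]
  have h0 : 0 ≤ ∫ z, ‖a z‖ := integral_nonneg fun z => norm_nonneg _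
  nlinarith [mul_nonneg h0 (pow_nonneg (norm_nonneg w) 3)]

theorem exists_norm_stationaryPart_le_timeCoord (hm : 4 ≤ m) (a : SchwartzMap (Spacetime m) ℂ) :
    ∃ C, 0 ≤ C ∧ ∀ (w : Spacetime m) (s : ℝ),
      ‖stationaryPart a w s‖ ≤ C * (1 + |timeCoord w|) ^ (2 - ((m + 1 : ℕ) : ℝ) / 2 + 1) := by
  obtain ⟨C, hC0, hC⟩ := exists_norm_stationaryPart_le (by omega) a
  set α : ℝ := 2 - ((m + 1 : ℕ) : ℝ) / 2 with hα
  have hα0 : α + 1 / 2 ≤ 0 := by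
    have : (4 : ℝ) ≤ m := by exact_mod_cast hm
    rw [hα]
    push_cast
    linarith
  set I : ℝ := ∫ z, ‖a z‖ with hI
  have hI0 : 0 ≤ I := integral_nonneg fun z => norm_nonneg _
  set K : ℝ := 3 ^ |α + 1| with hK
  have hK1 : 1 ≤ K := Real.one_le_rpow (by norm_num) (abs_nonneg _)
  refine ⟨(64 * I + C) * K, by positivity, fun w s => ?_⟩
  have ht := abs_timeCoord_le w
  have ht0 := abs_nonneg (timeCoord w)
  have hT : 0 < 1 + |timeCoord w| := by positivity
  suffices h : ∃ x, 0 ≤ x ∧ x ≤ K * (1 + |timeCoord w|) ^ (α + 1) ∧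
      ‖stationaryPart a w s‖ ≤ (64 * I + C) * x by
    obtain ⟨x, hx, hxK, h⟩ := h
    rw [mul_assoc]
    exact h.trans (mul_le_mul_of_nonneg_left hxK (by positivity))
  rcases le_total ‖w‖ 1 with hw | hw
  · refine ⟨1, zero_le_one, ?_, (norm_stationaryPart_le_integral a w s).trans ?_⟩
    · simpa using rpow_le_three_rpow_abs_mul one_pos hT (by linarith) (by linarith) (α + 1)
    · have := pow_le_one₀ (norm_nonneg w) hw (n := 3)
      rw [mul_one]
      nlinarith
  have hw0 : 0 < ‖w‖ := by linarith
  obtain ⟨h1, h2⟩ := hC w s hw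
  rcases le_total (|timeCoord w|) (‖w‖ / 3) with h | h
  · refine ⟨‖w‖ ^ (α + 1 / 2), by positivity, ?_, (h2 h).trans ?_⟩
    · rcases le_total 0 (α + 1) with hα1 | hα1
      · exact (Real.rpow_le_one_of_one_le_of_nonpos hw hα0).trans
          (one_le_mul_of_one_le_of_one_le hK1 (Real.one_le_rpow (by linarith) hα1))
      · have h3 : (3 * ‖w‖) ^ (α + 1) ≤ (1 + |timeCoord w|) ^ (α + 1) :=
          Real.rpow_le_rpow_of_nonpos hT (by linarith) hα1
        rw [Real.mul_rpow (by norm_num) hw0.le] at h3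
        have h4 : K * 3 ^ (α + 1) = 1 := by
          rw [hK, ← Real.rpow_add (by norm_num), abs_of_nonpos hα1, neg_add_cancel,
            Real.rpow_zero]
        calc ‖w‖ ^ (α + 1 / 2) ≤ ‖w‖ ^ (α + 1) := Real.rpow_le_rpow_of_exponent_le hw (by linarith)
          _ = K * (3 ^ (α + 1) * ‖w‖ ^ (α + 1)) := by rw [← mul_assoc, h4, one_mul]
          _ ≤ _ := mul_le_mul_of_nonneg_left h3 (by positivity)
    · exact mul_le_mul_of_nonneg_right (by linarith) (by positivity)
  · refine ⟨‖w‖ ^ (α + 1), by positivity, ?_, h1.trans ?_⟩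
    · exact rpow_le_three_rpow_abs_mul hw0 hT (by linarith) (by linarith) _
    · exact mul_le_mul_of_nonneg_right (by linarith) (by positivity)

theorem sq_mul_inv_pow_le {r l : ℝ} (hr : 0 ≤ r) (hl : 0 ≤ l) (n : ℕ) :
    l ^ 2 * ((1 + r + l) ^ (n + 4))⁻¹ ≤ ((1 + r) ^ n)⁻¹ * (1 + l ^ 2)⁻¹ := by
  have h1 : (1 + r) ^ n ≤ (1 + r + l) ^ n := pow_le_pow_left₀ (by positivity) (by linarith) n
  have h2 : (1 + l) ^ 4 ≤ (1 + r + l) ^ 4 := pow_le_pow_left₀ (by positivity) (by linarith) 4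
  have h3 : l ^ 2 * (1 + l ^ 2) ≤ (1 + r + l) ^ 4 := by
    refine le_trans ?_ h2
    nlinarith [mul_nonneg hl (sq_nonneg l), sq_nonneg l]
  rw [← div_eq_mul_inv, ← mul_inv, ← one_div, div_le_div_iff₀ (by positivity) (by positivity),
    one_mul, pow_add]
  calc l ^ 2 * ((1 + r) ^ n * (1 + l ^ 2)) = (1 + r) ^ n * (l ^ 2 * (1 + l ^ 2)) := by ring
    _ ≤ _ := mul_le_mul h1 h3 (by positivity) (by positivity)

/-- The frequency integral for the second derivative in the level parameter, over the positive
half-line. -/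
theorem exists_norm_integral_Ioi_le (hm : 4 ≤ m) (a : SchwartzMap (Spacetime m) ℂ)
    (haZ : ∀ z, a z ≠ 0 → z ∈ annulus m) :
    ∃ C, 0 ≤ C ∧ ∀ (w : Spacetime m) (s : ℝ),
      ‖∫ l in Set.Ioi 0, ((l ^ 2 : ℝ) : ℂ) * oscIntegral a w l * levelPhase l (-s)‖ ≤
        C * (1 + |timeCoord w|) ^ (2 - ((m + 1 : ℕ) : ℝ) / 2 + 1) := by
  have ha : ContDiff ℝ (⊤ : ℕ∞) a := a.smooth ⊤
  obtain ⟨C, hC0, hC⟩ := exists_norm_stationaryPart_le_timeCoord hm a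
  obtain ⟨D, hD0, hD⟩ := exists_norm_oscIntegral_le ha haZ (m + 4)
  set β : ℝ := 2 - ((m + 1 : ℕ) : ℝ) / 2 + 1 with hβ
  refine ⟨C + D * π, by positivity, fun w s => ?_⟩
  set f : ℝ → ℂ := fun l => ((l ^ 2 : ℝ) : ℂ) * oscIntegral a w l * levelPhase l (-s) with hf
  have hfi : Integrable f := by
    refine (integrable_pow_mul_oscIntegral ha haZ a.integrable w le_rfl).mul_bdd (c := 1) ?_
      (Eventually.of_forall fun l => (norm_levelPhase _ _).le)
    unfold levelPhase
    fun_prop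
  set S : Set ℝ := Set.Ioc (‖w‖ / 5) (4 * ‖w‖) with hS
  have hw := norm_nonneg w
  have hSI : Set.Ioi 0 ∩ S = S := Set.inter_eq_right.2 fun l hl =>
    lt_of_le_of_lt (by positivity) hl.1
  have hsplit := integral_inter_add_sdiff (measurableSet_Ioc (a := ‖w‖ / 5) (b := 4 * ‖w‖))
    (hfi.integrableOn (s := Set.Ioi 0))
  rw [hSI] at hsplit
  have hmid : ∫ l in S, f l = stationaryPart a w s := by
    rw [stationaryPart, intervalIntegral.integral_of_le (by linarith)]
  have hT : (1 : ℝ) ≤ 1 + |timeCoord w| := by linarith [abs_nonneg (timeCoord w)]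
  have hpow : ((1 + ‖w‖) ^ m)⁻¹ ≤ (1 + |timeCoord w|) ^ β := by
    calc ((1 + ‖w‖) ^ m)⁻¹ ≤ ((1 + |timeCoord w|) ^ m)⁻¹ := by
          have := abs_timeCoord_le w
          gcongr
      _ = (1 + |timeCoord w|) ^ (-(m : ℝ)) := by
          rw [Real.rpow_neg (by positivity), Real.rpow_natCast]
      _ ≤ _ := by
          refine Real.rpow_le_rpow_of_exponent_le hT ?_
          rw [hβ]
          push_cast
          have : (0 : ℝ) ≤ m := by positivity
          linarith
  have hb : ∀ l ∈ Set.Ioi 0 \ S, ‖f l‖ ≤ D * (1 + |timeCoord w|) ^ β * (1 + l ^ 2)⁻¹ := by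
    intro l hl
    have hl0 : 0 < l := hl.1
    have h1 : |l| ≤ ‖w‖ / 5 ∨ 4 * ‖w‖ ≤ |l| := by
      rw [abs_of_pos hl0]
      by_contra! h
      exact hl.2 ⟨h.1, h.2.le⟩
    have h2 := hD w l h1
    rw [abs_of_pos hl0, mul_comm, ← le_div_iff₀ (by positivity)] at h2
    have h3 : ‖f l‖ = l ^ 2 * ‖oscIntegral a w l‖ := by
      simp only [hf]
      rw [norm_mul, norm_levelPhase, mul_one, norm_mul, Complex.norm_real,
        Real.norm_of_nonneg (by positivity)]
    rw [h3]
    calc l ^ 2 * ‖oscIntegral a w l‖ ≤ l ^ 2 * (D / (1 + ‖w‖ + l) ^ (m + 4)) := by gcongr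
      _ = D * (l ^ 2 * ((1 + ‖w‖ + l) ^ (m + 4))⁻¹) := by ring
      _ ≤ D * (((1 + ‖w‖) ^ m)⁻¹ * (1 + l ^ 2)⁻¹) := by
          gcongr D * ?_
          exact sq_mul_inv_pow_le hw hl0.le m
      _ ≤ _ := by
          rw [mul_assoc]
          gcongr
  have hrest : ‖∫ l in Set.Ioi 0 \ S, f l‖ ≤ D * (1 + |timeCoord w|) ^ β * π := by
    rw [← integral_univ_inv_one_add_sq, ← integral_const_mul]
    refine (norm_integral_le_of_norm_le (integrable_inv_one_add_sq.const_mul _).integrableOn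
      (ae_restrict_of_forall_mem (measurableSet_Ioi.diff measurableSet_Ioc) hb)).trans ?_
    refine setIntegral_le_integral (integrable_inv_one_add_sq.const_mul _)
      (Eventually.of_forall fun l => ?_)
    simp only [Pi.zero_apply]
    positivity
  rw [← hsplit, hmid]
  refine (norm_add_le _ _).trans ((add_le_add (hC w s) hrest).trans (le_of_eq ?_))
  ring

theorem oscIntegral_neg {a : Spacetime m → ℂ} (hre : ∀ z, (starRingEnd ℂ) (a z) = a z)
    (w : Spacetime m) (l : ℝ) :
    oscIntegral a w (-l) = (starRingEnd ℂ) (oscIntegral a (-w) l) := by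
  rw [oscIntegral, oscIntegral, ← integral_conj]
  congr 1
  ext z
  rw [map_mul, hre, ← Complex.exp_conj, map_mul, Complex.conj_ofReal, Complex.conj_I,
    inner_neg_right]
  congr 2
  push_cast
  ring

/-- The frequency integral for the second derivative in the level parameter, over the whole line. -/
theorem exists_norm_integral_le (hm : 4 ≤ m) (a : SchwartzMap (Spacetime m) ℂ)
    (haZ : ∀ z, a z ≠ 0 → z ∈ annulus m) (hre : ∀ z, (starRingEnd ℂ) (a z) = a z) :
    ∃ C, 0 ≤ C ∧ ∀ (w : Spacetime m) (s : ℝ),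
      ‖∫ l, ((l ^ 2 : ℝ) : ℂ) * oscIntegral a w l * levelPhase l (-s)‖ ≤
        C * (1 + |timeCoord w|) ^ (2 - ((m + 1 : ℕ) : ℝ) / 2 + 1) := by
  obtain ⟨C, hC0, hC⟩ := exists_norm_integral_Ioi_le hm a haZ
  refine ⟨2 * C, by positivity, fun w s => ?_⟩
  have hfi : Integrable fun l : ℝ =>
      ((l ^ 2 : ℝ) : ℂ) * oscIntegral a w l * levelPhase l (-s) := by
    refine (integrable_pow_mul_oscIntegral (a.smooth ⊤) haZ a.integrable w le_rfl).mul_bdd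
      (c := 1) ?_ (Eventually.of_forall fun l => (norm_levelPhase _ _).le)
    unfold levelPhase
    fun_prop
  have hneg : ∫ l in Set.Iic 0, ((l ^ 2 : ℝ) : ℂ) * oscIntegral a w l * levelPhase l (-s) =
      (starRingEnd ℂ) (∫ l in Set.Ioi 0,
        ((l ^ 2 : ℝ) : ℂ) * oscIntegral a (-w) l * levelPhase l (-s)) := by
    rw [← integral_conj, ← neg_zero, ← integral_comp_neg_Ioi, neg_zero]
    congr 1
    ext l
    have h : levelPhase (-l) (-s) = (starRingEnd ℂ) (levelPhase l (-s)) := by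
      rw [levelPhase, levelPhase, ← Complex.exp_conj, map_mul, Complex.conj_ofReal, Complex.conj_I]
      congr 1
      push_cast
      ring
    rw [oscIntegral_neg hre, h, map_mul, map_mul, Complex.conj_ofReal, neg_sq]
  rw [← intervalIntegral.integral_Iic_add_Ioi (b := 0) hfi.integrableOn hfi.integrableOn, hneg]
  refine (norm_add_le _ _).trans ?_
  rw [RCLike.norm_conj]
  have h1 := hC (-w) s
  have h2 : timeCoord (-w) = -timeCoord w := rfl
  rw [h2, abs_neg] at h1
  linarith [hC w s]

end Assembly

end Wave

/-- For `n ≥ 5` and any smooth radial bump function `η` supported on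
the annulus `{1/4 ≤ ‖z‖ ≤ 5/4}`, there is a constant `C > 0` (depending only on `n`
and `η`) such that for all `(x,t) ∈ ℝ^{n-1} × ℝ` and all `s ∈ (-1/10, 1/10)`, the
second derivative in `s` of `(σ_s^{(0)})^∨(x,t)` satisfies
`|∂_s² (σ_s^{(0)})^∨(x,t)| ≤ C (1+|t|)^{(2-n)/2 + 2}`. -/
theorem statement8 (n m : ℕ) (hn : 5 ≤ n) (hnm : m + 1 = n)
    (η : Spacetime m → ℝ)
    (hηsm : ContDiff ℝ (⊤ : ℕ∞) η)
    (hηrad : ∀ z z' : Spacetime m, ‖z‖ = ‖z'‖ → η z = η z')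
    (hηsupp : ∀ z : Spacetime m, η z ≠ 0 → 1 / 4 ≤ ‖z‖ ∧ ‖z‖ ≤ 5 / 4) :
    ∃ C : ℝ, 0 < C ∧ ∀ (w : Spacetime m) (s : ℝ), s ∈ Set.Ioo (-(1 / 10) : ℝ) (1 / 10) →
      ‖iteratedDeriv 2 (fun s' : ℝ => sigmaCheck η s' w) s‖
        ≤ C * (1 + |timeCoord w|) ^ (((2 : ℝ) - n) / 2 + 2) := by
  have hm : 4 ≤ m := by omega
  have hzero : ∀ z : Spacetime m, z ∉ annulus m → η z = 0 := fun z hz => by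
    by_contra h
    exact hz (hηsupp z h)
  have ha : ContDiff ℝ (⊤ : ℕ∞) fun z : Spacetime m => ((2 * ‖z‖ * η z : ℝ) : ℂ) := by
    refine Complex.ofRealCLM.contDiff.comp (contDiff_iff_contDiffAt.2 fun z => ?_)
    by_cases hz : z = 0
    · have h : (fun z : Spacetime m => 2 * ‖z‖ * η z) =ᶠ[nhds z] fun _ => 0 := by
        rw [hz]
        filter_upwards [Metric.ball_mem_nhds (0 : Spacetime m) (by norm_num : (0 : ℝ) < 1 / 4)]
          with y hy
        rw [mem_ball_zero_iff] at hy
        rw [hzero y fun h => absurd h.1 (not_le.2 hy), mul_zero]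
      exact contDiffAt_const.congr_of_eventuallyEq h
    · exact (contDiffAt_const.mul (contDiffAt_norm ℝ hz)).mul hηsm.contDiffAt
  have hcs : HasCompactSupport fun z : Spacetime m => ((2 * ‖z‖ * η z : ℝ) : ℂ) :=
    HasCompactSupport.intro isCompact_annulus fun z hz => by simp [hzero z hz]
  set a : SchwartzMap (Spacetime m) ℂ := hcs.toSchwartzMap ha
  have ha_apply : ∀ z, a z = ((2 * ‖z‖ * η z : ℝ) : ℂ) := fun z => rfl
  have haZ : ∀ z, a z ≠ 0 → z ∈ annulus m := fun z hz => by
    by_contra h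
    exact hz (by simp [ha_apply, hzero z h])
  obtain ⟨C, hC0, hC⟩ := exists_norm_integral_le hm a haZ fun z => Complex.conj_ofReal _
  obtain ⟨c, hc⟩ := exists_hausdorffMeasure_eq_smul_volume m
  refine ⟨4 * π ^ 2 * (c * C) + 1, by positivity, fun w s _ => ?_⟩
  have hcont : Continuous fun z : Spacetime m =>
      (η z : ℂ) * Complex.exp (2 * (π : ℂ) * Complex.I * ((⟪z, w⟫ : ℝ) : ℂ)) := by
    have := hηsm.continuous
    fun_prop
  obtain ⟨hint, heq⟩ := integral_levelMeasure_mul_levelPhase hcont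
    (fun z hz => hηsupp z fun h => hz (by simp [h])) hc
  have hG : ∀ l, ∫ s, sigmaCheck η s w * levelPhase l s = (c : ℝ) * oscIntegral a w l := by
    intro l
    refine (heq l).trans ?_
    congr 2
    ext z
    have h : Complex.exp ((2 * π * (⟪z, w⟫ + l * waveSymbol z) : ℝ) * Complex.I) =
        Complex.exp (2 * (π : ℂ) * Complex.I * ((⟪z, w⟫ : ℝ) : ℂ)) *
          levelPhase l (waveSymbol z) := by
      rw [levelPhase, ← Complex.exp_add]
      congr 1
      push_cast
      ring
    rw [ha_apply, h, Complex.ofReal_mul (2 * ‖z‖)]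
    ring
  have hGi : ∀ k : ℕ, k ≤ 2 → Integrable fun l : ℝ =>
      ((l ^ k : ℝ) : ℂ) * ((c : ℝ) * oscIntegral a w l) := fun k hk =>
    ((integrable_pow_mul_oscIntegral ha haZ a.integrable w hk).const_mul ((c : ℝ) : ℂ)).congr
      (Eventually.of_forall fun l => mul_left_comm _ _ _)
  have hbound := norm_iteratedDeriv_two_le hint hG hGi s
  have e1 : ∀ l : ℝ, ((l ^ 2 : ℝ) : ℂ) * ((c : ℝ) * oscIntegral a w l) * levelPhase l (-s) =
      ((c : ℝ) : ℂ) * (((l ^ 2 : ℝ) : ℂ) * oscIntegral a w l * levelPhase l (-s)) :=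
    fun l => by ring
  simp only [e1] at hbound
  rw [integral_const_mul, norm_mul, Complex.norm_real, Real.norm_of_nonneg c.coe_nonneg] at hbound
  have e2 : ((2 : ℝ) - n) / 2 + 2 = 2 - ((m + 1 : ℕ) : ℝ) / 2 + 1 := by
    rw [hnm]
    ring
  rw [e2]
  refine hbound.trans ?_
  have h1 := mul_le_mul_of_nonneg_left (hC w s) (by positivity : 0 ≤ 4 * π ^ 2 * (c : ℝ))
  have h2 : 0 ≤ (1 + |timeCoord w|) ^ (2 - ((m + 1 : ℕ) : ℝ) / 2 + 1) := by positivity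
  linarith
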